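/- arXiv:1704.07111 — 4 statements merged into one kernel-verified Lean document; each statement's English description precedes it below -/
import Mathlib

section
/- Let G be a connected graph that has only finitely many 2-edge-connected components, and let T ⊆ V(G) be infinite. Then G contains a T-join. -/
namespace SimpleGraph

variable {V : Type*}

/-- A `T`-join in `G`: a set `P` of (oriented) paths, pairwise edge-disjoint, each with two
distinct endpoints lying in `T`, such that every vertex of `T` is an endpoint of exactly one
path of `P`. -/
def IsTJoin (G : SimpleGraph V) (T : Set V) (P : Set (Σ u : V, Σ v : V, G.Walk u v)) : Prop :=
  (∀ p ∈ P, p.2.2.IsPath ∧ p.1 ≠ p.2.1 ∧ p.1 ∈ T ∧ p.2.1 ∈ T) ∧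
  (∀ p ∈ P, ∀ q ∈ P, p ≠ q → ∀ e ∈ p.2.2.edges, e ∉ q.2.2.edges) ∧
  (∀ t ∈ T, ∃! p, p ∈ P ∧ (p.1 = t ∨ p.2.1 = t))

/-- `G` contains a `T`-join. -/
def HasTJoin (G : SimpleGraph V) (T : Set V) : Prop := ∃ P, G.IsTJoin T P

end SimpleGraph

namespace SimpleGraph

variable {V : Type*}

/-- A graph is 2-edge-connected if it is connected and stays connected after deleting any
single edge. -/
def TwoEdgeConnected (G : SimpleGraph V) : Prop :=
  G.Connected ∧ ∀ e ∈ G.edgeSet, (G.deleteEdges {e}).Connected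

end SimpleGraph

namespace SimpleGraph

variable {V : Type*}

/-- `S` is the vertex set of a 2-edge-connected component (i.e. a maximal 2-edge-connected
subgraph) of `G`. -/
def IsTwoEdgeConnectedComponent (G : SimpleGraph V) (S : Set V) : Prop :=
  (G.induce S).TwoEdgeConnected ∧
    ∀ S' : Set V, S ⊆ S' → (G.induce S').TwoEdgeConnected → S' = S

end SimpleGraph

namespace TJ
open SimpleGraph
universe u

/-- Edge-disjoint routing of tokens from `pos` to `fin`. -/
def Routes {V : Type*} {τ : Type*} (E : Set (Sym2 V)) (pos fin : τ → V) : Prop :=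
  ∃ L : τ → Set (Sym2 V), (∀ t, L t ⊆ E) ∧ (∀ t t', t ≠ t' → Disjoint (L t) (L t')) ∧
    ∀ t, (fromEdgeSet (L t)).Reachable (pos t) (fin t)

lemma even_insert {τ : Type*} {A : Set τ} {t : τ} (h : ¬ Even A.ncard) (ht : t ∉ A) :
    Even (insert t A).ncard := by
  have hf : A.Finite := by
    by_contra hi
    exact h (by rw [Set.Infinite.ncard hi]; exact Even.zero)
  rw [Set.ncard_insert_of_notMem ht hf]
  exact (Nat.not_even_iff_odd.1 h).add_one

lemma even_diff {τ : Type*} {A : Set τ} {t : τ} (h : ¬ Even A.ncard) (ht : t ∈ A) :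
    Even (A \ {t}).ncard := by
  have hf : A.Finite := by
    by_contra hi
    exact h (by rw [Set.Infinite.ncard hi]; exact Even.zero)
  rw [Set.ncard_sdiff_singleton_of_mem ht]
  exact Nat.Odd.sub_odd (Nat.not_even_iff_odd.1 h) odd_one

lemma nonempty_of_not_even {τ : Type*} {A : Set τ} (h : ¬ Even A.ncard) : A.Nonempty := by
  by_contra hi
  rw [Set.not_nonempty_iff_eq_empty] at hi
  exact h (by simp [hi])

lemma even_partition {τ ι : Type*} (A : Set τ) (g : τ → ι)
    (h : ∀ i, Even {t | t ∈ A ∧ g t = i}.ncard) : Even A.ncard := by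
  classical
  by_cases hA : A.Finite
  · lift A to Finset τ using hA
    rw [Set.ncard_coe_finset]
    rw [Finset.card_eq_sum_card_fiberwise (f := g) (t := A.image g)
      (fun x hx => by simpa using ⟨x, hx, rfl⟩)]
    refine Finset.even_sum _ (fun i _ => ?_)
    have := h i
    rw [← Set.ncard_coe_finset]
    have e : ((A.filter (fun x => g x = i) : Finset τ) : Set τ) = {t | t ∈ (A : Set τ) ∧ g t = i} := by
      ext; simp
    rw [e]; exact this
  · rw [Set.Infinite.ncard hA]; exact Even.zero

lemma exists_equiv_bool {τ : Type u} (A : Set τ) (h : Even A.ncard) :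
    ∃ ι : Type u, Nonempty (A ≃ ι × Bool) := by
  by_cases hA : A.Finite
  · obtain ⟨k, hk⟩ := h
    have := hA.fintype
    refine ⟨ULift (Fin k), ⟨Fintype.equivOfCardEq ?_⟩⟩
    rw [Fintype.card_prod, Fintype.card_ulift, Fintype.card_fin, Fintype.card_bool,
      ← Nat.card_eq_fintype_card, Nat.card_coe_set_eq, hk]; omega
  · have : Infinite A := Set.infinite_coe_iff.2 hA
    refine ⟨A, ?_⟩
    have h1 : Cardinal.mk A = Cardinal.mk (A × ULift.{u} Bool) := by
      rw [Cardinal.mk_prod, Cardinal.lift_id, Cardinal.lift_id, Cardinal.mul_eq_left]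
      · exact Cardinal.aleph0_le_mk A
      · exact (Cardinal.mk_le_aleph0).trans (Cardinal.aleph0_le_mk A)
      · exact Cardinal.mk_ne_zero _
    obtain ⟨e⟩ := Cardinal.eq.1 h1
    exact ⟨e.trans (Equiv.prodCongr (Equiv.refl _) Equiv.ulift)⟩

lemma hasTJoin_of_routes {V : Type u} (G : SimpleGraph V) (T : Set V) (fin : T → V)
    (h : Routes G.edgeSet (fun t : T => (t : V)) fin)
    (he : ∀ v, Even {t | fin t = v}.ncard) : G.HasTJoin T := by
  classical
  obtain ⟨L, hLE, hLd, hLr⟩ := h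
  choose ι hι using fun v => exists_equiv_bool {t | fin t = v} (he v)
  have e := fun v => (hι v).some
  let I := Σ v, ι v
  let a : I → Bool → T := fun i b => ((e i.1).symm (i.2, b)).1
  have ha : ∀ i b, fin (a i b) = i.1 := fun i b => ((e i.1).symm (i.2, b)).2
  have hinj : ∀ i b j c, a i b = a j c → i = j ∧ b = c := by
    rintro ⟨v, i⟩ b ⟨w, j⟩ c hab
    have h1 := ha ⟨v, i⟩ b
    have h2 := ha ⟨w, j⟩ c
    rw [hab, h2] at h1
    simp only at h1
    subst h1
    have := (e w).symm.injective (Subtype.ext hab)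
    simp only [Prod.mk.injEq] at this
    simp [this.1, this.2]
  have hsurj : ∀ t, ∃ i b, a i b = t := by
    intro t
    refine ⟨⟨fin t, (e (fin t) ⟨t, rfl⟩).1⟩, (e (fin t) ⟨t, rfl⟩).2, ?_⟩
    simp [a]
  have hw : ∀ i, ∃ w : G.Walk (a i false : V) (a i true : V), w.IsPath ∧
      ∀ x ∈ w.edges, x ∈ L (a i false) ∪ L (a i true) := by
    intro i
    have r1 := hLr (a i false)
    have r2 := hLr (a i true)
    rw [ha] at r1 r2
    have r : (fromEdgeSet (L (a i false) ∪ L (a i true))).Reachable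
        (a i false : V) (a i true : V) :=
      (r1.mono (fromEdgeSet_mono Set.subset_union_left)).trans
        (r2.mono (fromEdgeSet_mono Set.subset_union_right)).symm
    obtain ⟨w, hwp⟩ := r.exists_isPath
    have hle : ∀ x ∈ w.edges, x ∈ L (a i false) ∪ L (a i true) := by
      intro x hx
      have := w.edges_subset_edgeSet hx
      rw [edgeSet_fromEdgeSet] at this
      exact this.1
    have hG : ∀ x ∈ w.edges, x ∈ G.edgeSet := by
      intro x hx
      rcases hle x hx with h | h
      · exact hLE _ h
      · exact hLE _ h
    exact ⟨w.transfer G hG, hwp.transfer hG, by simpa using hle⟩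
  choose w hwp hwe using hw
  refine ⟨Set.range (fun i => ⟨_, _, w i⟩), ?_, ?_, ?_⟩
  · rintro _ ⟨i, rfl⟩
    refine ⟨hwp i, ?_, (a i false).2, (a i true).2⟩
    intro hh
    have := (hinj _ _ _ _ (Subtype.ext hh)).2
    simp at this
  · rintro _ ⟨i, rfl⟩ _ ⟨j, rfl⟩ hij x hx hx'
    have hij' : i ≠ j := by rintro rfl; exact hij rfl
    have key : ∀ b c, x ∈ L (a i b) → x ∈ L (a j c) → False := by
      intro b c h1 h2
      exact Set.disjoint_left.1 (hLd (a i b) (a j c) (fun h => hij' (hinj _ _ _ _ h).1)) h1 h2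
    rcases hwe i x hx with h1 | h1 <;> rcases hwe j x hx' with h2 | h2
    all_goals exact key _ _ h1 h2
  · intro t ht
    obtain ⟨i, b, hib⟩ := hsurj ⟨t, ht⟩
    refine ⟨⟨_, _, w i⟩, ⟨⟨i, rfl⟩, ?_⟩, ?_⟩
    · cases b
      · left; exact congrArg Subtype.val hib
      · right; exact congrArg Subtype.val hib
    · rintro _ ⟨⟨j, rfl⟩, hj⟩
      have : j = i := by
        rcases hj with hj | hj
        · exact (hinj j false i b ((Subtype.ext hj : a j false = ⟨t, ht⟩).trans hib.symm)).1
        · exact (hinj j true i b ((Subtype.ext hj : a j true = ⟨t, ht⟩).trans hib.symm)).1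
      rw [this]

lemma Routes.comp {V τ : Type*} {E₁ E₂ E : Set (Sym2 V)} {pos mid fin : τ → V}
    (h₁ : Routes E₁ pos mid) (h₂ : Routes E₂ mid fin) (hd : Disjoint E₁ E₂)
    (hE₁ : E₁ ⊆ E) (hE₂ : E₂ ⊆ E) : Routes E pos fin := by
  obtain ⟨L, hLE, hLd, hLr⟩ := h₁
  obtain ⟨M, hME, hMd, hMr⟩ := h₂
  refine ⟨fun t => L t ∪ M t, fun t => Set.union_subset ((hLE t).trans hE₁) ((hME t).trans hE₂),
    ?_, ?_⟩
  · intro t t' htt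
    simp only [Set.disjoint_union_left, Set.disjoint_union_right]
    refine ⟨⟨hLd t t' htt, ?_⟩, ?_, hMd t t' htt⟩
    · exact (hd.mono (hLE t') (hME t)).symm
    · exact hd.mono (hLE t) (hME t')
  · intro t
    exact ((hLr t).mono (fromEdgeSet_mono Set.subset_union_left)).trans
        ((hMr t).mono (fromEdgeSet_mono Set.subset_union_right))

/-- Parallel composition over a partition of the tokens. -/
lemma Routes.par {V τ ι : Type*} {E : Set (Sym2 V)} (F : ι → Set (Sym2 V))
    (hF : ∀ i j, i ≠ j → Disjoint (F i) (F j)) (hFE : ∀ i, F i ⊆ E) (g : τ → ι)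
    {pos fin : τ → V}
    (h : ∀ i, Routes (F i) (fun t : {t // g t = i} => pos t) (fun t => fin t)) :
    Routes E pos fin := by
  choose L hLE hLd hLr using h
  refine ⟨fun t => L (g t) ⟨t, rfl⟩, fun t => (hLE _ _).trans (hFE _), ?_, fun t => hLr _ _⟩
  intro t t' htt
  by_cases hg : g t = g t'
  · have : L (g t') ⟨t', rfl⟩ = L (g t) ⟨t', hg.symm⟩ := by
      have aux : ∀ i (hi : g t' = i), L (g t') ⟨t', rfl⟩ = L i ⟨t', hi⟩ := by
        rintro i rfl; rfl
      exact aux _ hg.symm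
    change Disjoint (L (g t) ⟨t, rfl⟩) (L (g t') ⟨t', rfl⟩)
    rw [this]
    exact hLd _ _ _ (fun h => htt (congrArg Subtype.val h))
  · exact (hF _ _ hg).mono (hLE _ _) (hLE _ _)

section Tree

variable {V τ : Type*} (p : V → V) (R : Set V) (pos : τ → V)

/-- Partial routing state. -/
structure St where
  U : Set V
  m : τ → ℕ
  disj : ∀ v ∈ U, v ∉ R
  down : ∀ v, p v ∈ U → v ∈ U
  cross : ∀ t i, i < m t → p^[i] (pos t) ∈ U
  inj : ∀ t t' i j, i < m t → j < m t' → p^[i] (pos t) = p^[j] (pos t') → t = t'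
  even : ∀ v ∈ U, Even {t | p^[m t] (pos t) = v}.ncard

variable {p R pos}

lemma St.down_iter (s : St p R pos) (k : ℕ) (v : V) (h : p^[k] v ∈ s.U) : v ∈ s.U := by
  induction k with
  | zero => exact h
  | succ k ih =>
    rw [Function.iterate_succ_apply'] at h
    exact ih (s.down _ h)

instance : Preorder (St p R pos) where
  le s s' := s.U ⊆ s'.U ∧ (∀ t, s.m t ≤ s'.m t) ∧ ∀ t, p^[s.m t] (pos t) ∈ s.U → s'.m t = s.m t
  le_refl s := ⟨subset_rfl, fun _ => le_rfl, fun _ _ => rfl⟩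
  le_trans a b c h1 h2 := by
    refine ⟨h1.1.trans h2.1, fun t => (h1.2.1 t).trans (h2.2.1 t), fun t ht => ?_⟩
    have := h1.2.2 t ht
    rw [h2.2.2 t (by rw [this]; exact h1.1 ht), this]

lemma St.le_def (s s' : St p R pos) : s ≤ s' ↔ (s.U ⊆ s'.U ∧ (∀ t, s.m t ≤ s'.m t) ∧
    ∀ t, p^[s.m t] (pos t) ∈ s.U → s'.m t = s.m t) := Iff.rfl

lemma iter_rank {d : V → ℕ} (hd : ∀ v, v ∉ R → d (p v) < d v) (v : V) (k : ℕ)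
    (h : ∀ i < k, p^[i] v ∉ R) : d (p^[k] v) + k ≤ d v := by
  induction k with
  | zero => simp
  | succ k ih =>
    have h1 := ih (fun i hi => h i (by omega))
    have h2 := hd _ (h k (by omega))
    rw [Function.iterate_succ_apply']
    omega

lemma St.m_le {d : V → ℕ} (hd : ∀ v, v ∉ R → d (p v) < d v) (s : St p R pos) (t : τ) :
    s.m t ≤ d (pos t) := by
  have := iter_rank hd (pos t) (s.m t) (fun i hi => s.disj _ (s.cross t i hi))
  omega

lemma St.bdd {d : V → ℕ} (hd : ∀ v, v ∉ R → d (p v) < d v) (c : Set (St p R pos))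
    (hc : IsChain (· ≤ ·) c) : BddAbove c := by
  classical
  rcases c.eq_empty_or_nonempty with rfl | hne
  · exact ⟨⟨∅, fun _ => 0, by simp, by simp, by simp, by simp, by simp⟩, by simp⟩
  have hmax : ∀ t, ∃ s ∈ c, ∀ s' ∈ c, s'.m t ≤ s.m t := by
    intro t
    have hb : BddAbove ((fun s : St p R pos => s.m t) '' c) := by
      refine ⟨d (pos t), ?_⟩
      rintro _ ⟨s, _, rfl⟩
      exact s.m_le hd t
    obtain ⟨s, hs, hs'⟩ := Nat.sSup_mem (hne.image _) hb
    refine ⟨s, hs, fun s' hs2 => ?_⟩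
    have : s'.m t ≤ _ := le_csSup hb ⟨s', hs2, rfl⟩
    exact this.trans hs'.ge
  choose S hSc hSm using hmax
  -- the limiting counter agrees with any later state
  have hagree : ∀ t, ∀ s ∈ c, S t ≤ s → s.m t = (S t).m t := fun t s hs hle =>
    le_antisymm (hSm t s hs) (hle.2.1 t)
  have hdir : ∀ s ∈ c, ∀ s' ∈ c, ∃ s'' ∈ c, s ≤ s'' ∧ s' ≤ s'' := by
    intro s hs s' hs'
    rcases hc.total hs hs' with h | h
    · exact ⟨s', hs', h, le_rfl⟩
    · exact ⟨s, hs, le_rfl, h⟩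
  refine ⟨⟨⋃ s ∈ c, s.U, fun t => (S t).m t, ?_, ?_, ?_, ?_, ?_⟩, ?_⟩
  · intro v hv
    simp only [Set.mem_iUnion] at hv
    obtain ⟨s, _, hv⟩ := hv
    exact s.disj v hv
  · intro v hv
    simp only [Set.mem_iUnion] at hv ⊢
    obtain ⟨s, hs, hv⟩ := hv
    exact ⟨s, hs, s.down v hv⟩
  · intro t i hi
    simp only [Set.mem_iUnion]
    exact ⟨S t, hSc t, (S t).cross t i hi⟩
  · intro t t' i j hi hj h
    obtain ⟨s, hs, h1, h2⟩ := hdir _ (hSc t) _ (hSc t')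
    refine s.inj t t' i j ?_ ?_ h
    · rw [hagree t s hs h1]; exact hi
    · rw [hagree t' s hs h2]; exact hj
  · intro v hv
    simp only [Set.mem_iUnion] at hv
    obtain ⟨s, hs, hv⟩ := hv
    have : {t | p^[(S t).m t] (pos t) = v} = {t | p^[s.m t] (pos t) = v} := by
      ext t
      simp only [Set.mem_ofPred_eq]
      obtain ⟨s', hs', h1, h2⟩ := hdir _ (hSc t) _ hs
      rw [← hagree t s' hs' h1]
      constructor
      · intro h
        have hle := h2.2.1 t
        have hmem : p^[s.m t] (pos t) ∈ s.U := by
          apply s.down_iter (s'.m t - s.m t)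
          rw [← Function.iterate_add_apply, Nat.sub_add_cancel hle, h]
          exact hv
        rw [← h2.2.2 t hmem]; exact h
      · intro h
        rw [h2.2.2 t (by rw [h]; exact hv)]; exact h
    rw [this]
    exact s.even v hv
  · intro s hs
    refine ⟨?_, fun t => hSm t s hs, fun t ht => ?_⟩
    · intro v hv
      simp only [Set.mem_iUnion]
      exact ⟨s, hs, hv⟩
    · obtain ⟨s', hs', h1, h2⟩ := hdir _ (hSc t) _ hs
      change (S t).m t = _
      rw [← hagree t s' hs' h1]
      exact h2.2.2 t ht

/-- In a maximal state, every vertex off `U ∪ R` has a child off `U`. -/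
lemma St.child (s : St p R pos) (hs : IsMax s) {d : V → ℕ}
    (hd : ∀ v, v ∉ R → d (p v) < d v) (v : V) (hvU : v ∉ s.U) (hvR : v ∉ R) :
    ∃ c, c ∉ s.U ∧ p c = v := by
  classical
  by_contra hcon
  push Not at hcon
  have hch : ∀ c, p c = v → c ∈ s.U := fun c hc => by
    by_contra h; exact hcon c h hc
  suffices h : ∃ s' : St p R pos, s ≤ s' ∧ v ∈ s'.U by
    obtain ⟨s', h1, h2⟩ := h
    exact hvU ((hs h1).1 h2)
  have hpv : p v ≠ v := fun h => by have := hd v hvR; rw [h] at this; omega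
  have hdown : ∀ w, p w ∈ insert v s.U → w ∈ insert v s.U := by
    rintro w (h | h)
    · exact Or.inr (hch w h)
    · exact Or.inr (s.down w h)
  have hdisj : ∀ w ∈ insert v s.U, w ∉ R := by
    rintro w (rfl | h)
    · exact hvR
    · exact s.disj w h
  by_cases hev : Even {t | p^[s.m t] (pos t) = v}.ncard
  · refine ⟨⟨insert v s.U, s.m, hdisj, hdown, fun t i hi => Or.inr (s.cross t i hi), s.inj, ?_⟩,
      ⟨Set.subset_insert _ _, fun _ => le_rfl, fun _ _ => rfl⟩, Set.mem_insert _ _⟩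
    rintro w (rfl | h)
    · exact hev
    · exact s.even w h
  · obtain ⟨t0, ht0⟩ := nonempty_of_not_even hev
    simp only [Set.mem_ofPred_eq] at ht0
    have hpvU : p v ∉ s.U := fun h => hvU (s.down v h)
    let m' : τ → ℕ := fun t => if t = t0 then s.m t + 1 else s.m t
    have hm0 : m' t0 = s.m t0 + 1 := by simp [m']
    have hm1 : ∀ t, t ≠ t0 → m' t = s.m t := fun t h => by simp [m', h]
    have hcr : ∀ t i, i < m' t → i < s.m t ∨ (t = t0 ∧ p^[i] (pos t) = v) := by
      intro t i hi
      by_cases h : t = t0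
      · subst h
        rw [hm0] at hi
        rcases Nat.lt_succ_iff_lt_or_eq.1 hi with h | h
        · exact Or.inl h
        · right; refine ⟨rfl, ?_⟩; rw [h]; exact ht0
      · rw [hm1 t h] at hi; exact Or.inl hi
    refine ⟨⟨insert v s.U, m', hdisj, hdown, ?_, ?_, ?_⟩, ⟨Set.subset_insert _ _, ?_, ?_⟩,
      Set.mem_insert _ _⟩
    · intro t i hi
      rcases hcr t i hi with h | ⟨_, h⟩
      · exact Or.inr (s.cross t i h)
      · exact Or.inl h
    · intro t t' i j hi hj h
      rcases hcr t i hi with h1 | ⟨h1, h1'⟩ <;> rcases hcr t' j hj with h2 | ⟨h2, h2'⟩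
      · exact s.inj t t' i j h1 h2 h
      · exact absurd (s.cross t i h1) (by rw [h, h2']; exact hvU)
      · exact absurd (s.cross t' j h2) (by rw [← h, h1']; exact hvU)
      · rw [h1, h2]
    · rintro w (rfl | h)
      · have : {t | p^[m' t] (pos t) = w} = {t | p^[s.m t] (pos t) = w} \ {t0} := by
          ext t
          simp only [Set.mem_ofPred_eq, Set.mem_sdiff, Set.mem_singleton_iff]
          by_cases h : t = t0
          · subst h
            rw [hm0, Function.iterate_succ_apply', ht0]
            simp [hpv]
          · rw [hm1 t h]; simp [h]
        rw [this]
        exact even_diff hev ht0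
      · have : {t | p^[m' t] (pos t) = w} = {t | p^[s.m t] (pos t) = w} := by
          ext t
          simp only [Set.mem_ofPred_eq]
          by_cases h' : t = t0
          · subst h'
            rw [hm0, Function.iterate_succ_apply', ht0]
            constructor
            · rintro rfl; exact absurd h hpvU
            · rintro rfl; exact absurd h hvU
          · rw [hm1 t h']
        rw [this]
        exact s.even w h
    · intro t
      change s.m t ≤ m' t
      simp only [m']; split <;> omega
    · intro t ht
      change m' t = s.m t
      apply hm1
      rintro rfl
      rw [ht0] at ht
      exact hvU ht

/-- In a maximal state, below every vertex off `U ∪ R` there is a token off `U`. -/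
lemma St.token (s : St p R pos) (hs : IsMax s) (hR : ∀ v ∈ R, p v = v)
    (v : V) (hvU : v ∉ s.U) (hvR : v ∉ R) :
    ∃ t k, p^[s.m t] (pos t) ∉ s.U ∧ p^[k] (p^[s.m t] (pos t)) = v := by
  by_contra hcon
  push Not at hcon
  suffices h : ∃ s' : St p R pos, s ≤ s' ∧ v ∈ s'.U by
    obtain ⟨s', h1, h2⟩ := h
    exact hvU ((hs h1).1 h2)
  refine ⟨⟨s.U ∪ {w | ∃ k, p^[k] w = v}, s.m, ?_, ?_, fun t i hi => Or.inl (s.cross t i hi),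
    s.inj, ?_⟩, ⟨Set.subset_union_left, fun _ => le_rfl, fun _ _ => rfl⟩, Or.inr ⟨0, rfl⟩⟩
  · rintro w (h | ⟨k, h⟩) hw
    · exact s.disj w h hw
    · rw [Function.iterate_fixed (hR w hw)] at h
      exact hvR (h ▸ hw)
  · rintro w (h | ⟨k, h⟩)
    · exact Or.inl (s.down w h)
    · exact Or.inr ⟨k + 1, h⟩
  · rintro w (h | ⟨k, h⟩)
    · exact s.even w h
    · by_cases hw : w ∈ s.U
      · exact s.even w hw
      · have : {t | p^[s.m t] (pos t) = w} = ∅ := by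
          ext t
          simp only [Set.mem_ofPred_eq, Set.mem_empty_iff_false, iff_false]
          rintro rfl
          exact hcon t k hw h
        rw [this]; simp

end Tree

lemma tree_lemma {V τ : Type*} (p : V → V) (R : Set V) (d : V → ℕ) (pos : τ → V)
    (hR : ∀ v ∈ R, p v = v) (hd : ∀ v, v ∉ R → d (p v) < d v) :
    ∃ m : τ → ℕ, (∀ t i, i < m t → p^[i] (pos t) ∉ R) ∧
      (∀ t t' i j, i < m t → j < m t' → p^[i] (pos t) = p^[j] (pos t') → t = t') ∧
      ∀ v, v ∉ R → Even {t | p^[m t] (pos t) = v}.ncard := by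
  classical
  obtain ⟨s, hs⟩ := zorn_le (α := St p R pos) (St.bdd hd)
  obtain ⟨cur, hcur⟩ : ∃ cur : τ → V, ∀ t, cur t = p^[s.m t] (pos t) := ⟨_, fun _ => rfl⟩
  have hN : ∀ v : {v // v ∉ s.U ∧ v ∉ R}, ∃ k, 0 < k ∧ ∃ t, cur t ∉ s.U ∧ p^[k] (cur t) = v := by
    rintro ⟨v, hU, hvR⟩
    obtain ⟨c, hcU, hc⟩ := s.child hs hd v hU hvR
    have hcR : c ∉ R := fun h => hvR (by rw [← hc, hR c h]; exact h)
    obtain ⟨t, k, h1, h2⟩ := s.token hs hR c hcU hcR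
    refine ⟨k + 1, by omega, t, by rw [hcur]; exact h1, ?_⟩
    rw [hcur, Function.iterate_succ_apply', h2, hc]
  have hN' : ∀ v : {v // v ∉ s.U ∧ v ∉ R}, ∃ k t, 0 < k ∧ cur t ∉ s.U ∧ p^[k] (cur t) = v ∧
      ∀ i t', 0 < i → i < k → cur t' ≠ p^[i] (cur t) := by
    intro v
    obtain ⟨h0, t, h1, h2⟩ := Nat.find_spec (hN v)
    refine ⟨Nat.find (hN v), t, h0, h1, h2, ?_⟩
    intro i t' hi hik he
    refine Nat.find_min (hN v) (m := Nat.find (hN v) - i) (by omega) ⟨by omega, t', ?_, ?_⟩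
    · rw [he]; exact fun h => h1 (s.down_iter _ _ h)
    · rw [he, ← Function.iterate_add_apply, Nat.sub_add_cancel hik.le, h2]
  choose K tk hK0 hKU hKv hKmin using hN'
  have hsegU : ∀ y i, p^[i] (cur (tk y)) ∉ s.U := fun y i h => hKU y (s.down_iter _ _ h)
  have hsegR : ∀ y i, i < K y → p^[i] (cur (tk y)) ∉ R := by
    intro y i hi h
    have h1 := hKv y
    rw [← Nat.sub_add_cancel hi.le, Function.iterate_add_apply,
      Function.iterate_fixed (hR _ h)] at h1
    exact y.2.2 (h1 ▸ h)
  have hdlt : ∀ y : {v // v ∉ s.U ∧ v ∉ R}, d y < d (cur (tk y)) := by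
    intro y
    have := iter_rank hd (cur (tk y)) (K y) (hsegR y)
    rw [hKv] at this
    have := hK0 y
    omega
  obtain ⟨S, hS⟩ : ∃ S : {v // v ∉ s.U ∧ v ∉ R} → Prop, ∀ y, S y ↔
      ¬ Even {t | cur t = y ∧ ∀ y', t = tk y' → ¬ S y'}.ncard := by
    let wf : WellFounded (fun a b : {v // v ∉ s.U ∧ v ∉ R} => d a < d b) :=
      (measure (fun a : {v // v ∉ s.U ∧ v ∉ R} => d a)).wf
    let F : ∀ y : {v // v ∉ s.U ∧ v ∉ R}, (∀ y' : {v // v ∉ s.U ∧ v ∉ R}, d y' < d y → Prop) →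
      Prop := fun y ih => ¬ Even {t | cur t = y ∧ ∀ (y' : {v // v ∉ s.U ∧ v ∉ R}) (h : d y' < d y), t = tk y' → ¬ ih y' h}.ncard
    refine ⟨wf.fix F, fun y => ?_⟩
    rw [wf.fix_eq]
    have : {t | cur t = y ∧ ∀ y', t = tk y' → ¬ wf.fix F y'} =
        {t | cur t = y ∧ ∀ (y' : {v // v ∉ s.U ∧ v ∉ R}) (_ : d y' < d y), t = tk y' → ¬ wf.fix F y'} := by
      ext t
      simp only [Set.mem_ofPred_eq]
      refine and_congr_right (fun ht => ⟨fun h y' _ => h y', fun h y' hy' => h y' ?_ hy'⟩)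
      have := hdlt y'
      rw [← hy', ht] at this
      exact this
    rw [this]
  have hSt : ∀ y, S y → ∃ t, cur t = y := by
    intro y hy
    obtain ⟨t, ht⟩ := nonempty_of_not_even ((hS y).1 hy)
    exact ⟨t, ht.1⟩
  have haux : ∀ y y' i j, S y → i < K y → j < K y' →
      p^[i] (cur (tk y)) = p^[j] (cur (tk y')) → K y - i < K y' - j → False := by
    intro y y' i j hy hi hj h hlt
    obtain ⟨t, ht⟩ := hSt y hy
    refine hKmin y' (K y - i + j) t (by omega) (by omega) ?_
    rw [Function.iterate_add_apply, ← h, ← Function.iterate_add_apply, Nat.sub_add_cancel hi.le,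
      hKv, ht]
  have hdis : ∀ y y' i j, S y → S y' → i < K y → j < K y' →
      p^[i] (cur (tk y)) = p^[j] (cur (tk y')) → y = y' := by
    intro y y' i j hy hy' hi hj h
    rcases lt_trichotomy (K y - i) (K y' - j) with hlt | heq | hlt
    · exact (haux y y' i j hy hi hj h hlt).elim
    · apply Subtype.ext
      rw [← hKv y, ← hKv y', ← Nat.sub_add_cancel hi.le, Function.iterate_add_apply, h, heq,
        ← Function.iterate_add_apply, Nat.sub_add_cancel hj.le]
    · exact (haux y' y j i hy' hj hi h.symm hlt).elim
  obtain ⟨m', hm1, hm2⟩ : ∃ m' : τ → ℕ, (∀ y, S y → m' (tk y) = s.m (tk y) + K y) ∧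
      (∀ t, (∀ y, S y → t ≠ tk y) → m' t = s.m t) := by
    refine ⟨fun t => if h : ∃ y, S y ∧ t = tk y then s.m t + K h.choose else s.m t, ?_, ?_⟩
    · intro y hy
      have h : ∃ y', S y' ∧ tk y = tk y' := ⟨y, hy, rfl⟩
      simp only [dif_pos h]
      have : h.choose = y := by
        refine (hdis y h.choose 0 0 hy h.choose_spec.1 (hK0 _) (hK0 _) ?_).symm
        rw [← h.choose_spec.2]
      rw [this]
    · intro t ht
      have h : ¬ ∃ y, S y ∧ t = tk y := by
        rintro ⟨y, hy, h⟩; exact ht y hy h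
      simp only [dif_neg h]
  have hcr : ∀ t i, i < m' t → i < s.m t ∨
      ∃ y j, S y ∧ t = tk y ∧ j < K y ∧ p^[i] (pos t) = p^[j] (cur (tk y)) := by
    intro t i hi
    by_cases h : ∃ y, S y ∧ t = tk y
    · obtain ⟨y, hy, rfl⟩ := h
      rw [hm1 y hy] at hi
      by_cases h : i < s.m (tk y)
      · exact Or.inl h
      · refine Or.inr ⟨y, i - s.m (tk y), hy, rfl, by omega, ?_⟩
        rw [hcur, ← Function.iterate_add_apply, Nat.sub_add_cancel (by omega)]
    · left
      rw [hm2 t (fun y hy he => h ⟨y, hy, he⟩)] at hi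
      exact hi
  have hfin1 : ∀ y, S y → p^[m' (tk y)] (pos (tk y)) = y := by
    intro y hy
    rw [hm1 y hy, Nat.add_comm, Function.iterate_add_apply, ← hcur, hKv]
  have hfin2 : ∀ t, (∀ y, S y → t ≠ tk y) → p^[m' t] (pos t) = cur t := by
    intro t ht
    rw [hm2 t ht, hcur]
  refine ⟨m', ?_, ?_, ?_⟩
  · intro t i hi
    rcases hcr t i hi with h | ⟨y, j, hy, _, hj, h⟩
    · exact s.disj _ (s.cross t i h)
    · rw [h]; exact hsegR y j hj
  · intro t t' i j hi hj h
    rcases hcr t i hi with h1 | ⟨y, k, hy, hty, hk, h1⟩ <;>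
      rcases hcr t' j hj with h2 | ⟨y', k', hy', hty', hk', h2⟩
    · exact s.inj t t' i j h1 h2 h
    · exact absurd (s.cross t i h1) (by rw [h, h2]; exact hsegU _ _)
    · exact absurd (s.cross t' j h2) (by rw [← h, h1]; exact hsegU _ _)
    · rw [hty, hty', hdis y y' k k' hy hy' hk hk' (by rw [← h1, ← h2, h])]
  · intro v hvR
    by_cases hvU : v ∈ s.U
    · have : {t | p^[m' t] (pos t) = v} = {t | p^[s.m t] (pos t) = v} := by
        ext t
        simp only [Set.mem_ofPred_eq]
        by_cases h : ∃ y, S y ∧ t = tk y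
        · obtain ⟨y, hy, rfl⟩ := h
          rw [hfin1 y hy, ← hcur]
          constructor
          · rintro rfl; exact absurd hvU y.2.1
          · intro h; exact absurd hvU (h ▸ hKU y)
        · rw [hfin2 t (fun y hy he => h ⟨y, hy, he⟩), hcur]
      rw [this]
      exact s.even v hvU
    · obtain ⟨y, rfl⟩ : ∃ y : {v // v ∉ s.U ∧ v ∉ R}, (y : V) = v := ⟨⟨v, hvU, hvR⟩, rfl⟩
      by_cases hy : S y
      · have : {t | p^[m' t] (pos t) = y} =
            insert (tk y) {t | cur t = y ∧ ∀ y', t = tk y' → ¬ S y'} := by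
          ext t
          simp only [Set.mem_ofPred_eq, Set.mem_insert_iff]
          by_cases h : ∃ y, S y ∧ t = tk y
          · obtain ⟨y', hy', rfl⟩ := h
            rw [hfin1 y' hy']
            constructor
            · intro h; left; rw [Subtype.ext h]
            · rintro (h | h)
              · rw [← hfin1 y' hy', h, hfin1 y hy]
              · exact absurd hy' (h.2 y' rfl)
          · rw [hfin2 t (fun y hy he => h ⟨y, hy, he⟩)]
            constructor
            · intro h'; right; exact ⟨h', fun y' hy' hS' => h ⟨y', hS', hy'⟩⟩
            · rintro (h' | h')
              · exact absurd ⟨y, hy, h'⟩ h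
              · exact h'.1
        rw [this]
        refine even_insert ((hS y).1 hy) ?_
        intro h
        exact h.2 y rfl hy
      · have : {t | p^[m' t] (pos t) = y} = {t | cur t = y ∧ ∀ y', t = tk y' → ¬ S y'} := by
          ext t
          simp only [Set.mem_ofPred_eq]
          by_cases h : ∃ y, S y ∧ t = tk y
          · obtain ⟨y', hy', rfl⟩ := h
            rw [hfin1 y' hy']
            constructor
            · intro h; exact absurd (Subtype.ext h ▸ hy') hy
            · intro h; exact absurd hy' (h.2 y' rfl)
          · rw [hfin2 t (fun y hy he => h ⟨y, hy, he⟩)]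
            constructor
            · intro h'; exact ⟨h', fun y' hy' hS' => h ⟨y', hS', hy'⟩⟩
            · exact fun h' => h'.1
        rw [this]
        by_contra hne
        exact hy ((hS y).2 hne)

/-- Claim B: route tokens towards a set of roots. -/
lemma route_to_roots {V τ : Type*} (H : SimpleGraph V) (R : Set V) (pos : τ → V)
    (hpos : ∀ t, ∃ r ∈ R, H.Reachable (pos t) r) :
    ∃ fin : τ → V, Routes H.edgeSet pos fin ∧
      (∀ v, v ∉ R → Even {t | fin t = v}.ncard) ∧ ∀ t, pos t ∈ R → fin t = pos t := by
  classical
  have hp : ∀ v : V, ∃ n : ℕ, (∃ r ∈ R, H.Reachable v r) → ∃ r ∈ R, ∃ w : H.Walk v r,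
      w.length = n ∧ ∀ r' ∈ R, ∀ w' : H.Walk v r', n ≤ w'.length := by
    intro v
    by_cases h : ∃ r ∈ R, H.Reachable v r
    · have h' : ∃ n, ∃ r ∈ R, ∃ w : H.Walk v r, w.length = n := by
        obtain ⟨r, hr, ⟨w⟩⟩ := h
        exact ⟨_, r, hr, w, rfl⟩
      refine ⟨Nat.find h', fun _ => ?_⟩
      obtain ⟨r, hr, w, hw⟩ := Nat.find_spec h'
      exact ⟨r, hr, w, hw, fun r' hr' w' => Nat.find_min' h' ⟨r', hr', w', rfl⟩⟩
    · exact ⟨0, fun h' => absurd h' h⟩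
  choose d hd using hp
  let R' : Set V := {v | v ∈ R ∨ ¬ ∃ r ∈ R, H.Reachable v r}
  have hpar : ∀ v, ∃ u, (v ∈ R' → u = v) ∧ (v ∉ R' → H.Adj v u ∧ d u < d v) := by
    intro v
    by_cases hv : v ∈ R'
    · exact ⟨v, fun _ => rfl, fun h => absurd hv h⟩
    · have hv' : v ∉ R ∧ ∃ r ∈ R, H.Reachable v r := by
        simpa only [R', Set.mem_ofPred_eq, not_or, not_not] using hv
      obtain ⟨r, hr, w, hw, hmin⟩ := hd v hv'.2
      cases w with
      | nil => exact absurd hr hv'.1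
      | @cons _ u _ hadj w =>
        refine ⟨u, fun h => absurd h hv, fun _ => ⟨hadj, ?_⟩⟩
        obtain ⟨r', hr', w', hw', hmin'⟩ := hd u ⟨r, hr, ⟨w⟩⟩
        have := hmin' r hr w
        rw [Walk.length_cons] at hw
        omega
  choose p hp1 hp2 using hpar
  obtain ⟨m, hm1, hm2, hm3⟩ := tree_lemma p R' d pos hp1 (fun v hv => (hp2 v hv).2)
  refine ⟨fun t => p^[m t] (pos t), ⟨fun t => {e | ∃ i < m t, e = s(p^[i] (pos t), p (p^[i] (pos t)))},
    ?_, ?_, ?_⟩, ?_, ?_⟩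
  rotate_right
  · intro t ht
    have h0 : m t = 0 := by
      by_contra h
      exact hm1 t 0 (Nat.pos_of_ne_zero h) (Or.inl ht)
    simp only [h0, Function.iterate_zero, id]
  · rintro t _ ⟨i, hi, rfl⟩
    exact (hp2 _ (hm1 t i hi)).1
  · intro t t' htt
    rw [Set.disjoint_left]
    rintro e ⟨i, hi, rfl⟩ ⟨j, hj, he⟩
    rw [Sym2.eq_iff] at he
    rcases he with ⟨h, _⟩ | ⟨h1, h2⟩
    · exact htt (hm2 t t' i j hi hj h)
    · have e1 := (hp2 _ (hm1 t i hi)).2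
      have e2 := (hp2 _ (hm1 t' j hj)).2
      rw [h2] at e1
      rw [← h1] at e2
      omega
  · intro t
    have : ∀ n ≤ m t, (fromEdgeSet {e | ∃ i < m t, e = s(p^[i] (pos t), p (p^[i] (pos t)))}).Reachable
        (pos t) (p^[n] (pos t)) := by
      intro n
      induction n with
      | zero => intro _; exact Reachable.refl _
      | succ n ih =>
        intro hn
        refine (ih (by omega)).trans (Adj.reachable ?_)
        rw [Function.iterate_succ_apply', fromEdgeSet_adj]
        exact ⟨⟨n, by omega, rfl⟩, (hp2 _ (hm1 t n (by omega))).1.ne⟩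
    exact this _ le_rfl
  · intro v hv
    by_cases hv' : v ∈ R'
    · have hv'' : ¬ ∃ r ∈ R, H.Reachable v r := by
        rcases hv' with h | h
        · exact absurd h hv
        · exact h
      have : {t | p^[m t] (pos t) = v} = ∅ := by
        ext t
        simp only [Set.mem_ofPred_eq, Set.mem_empty_iff_false, iff_false]
        intro h
        have hreach : ∀ n ≤ m t, H.Reachable (pos t) (p^[n] (pos t)) := by
          intro n
          induction n with
          | zero => intro _; exact Reachable.refl _
          | succ n ih =>
            intro hn
            refine (ih (by omega)).trans (Adj.reachable ?_)
            rw [Function.iterate_succ_apply']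
            exact (hp2 _ (hm1 t n (by omega))).1
        obtain ⟨r, hr, h'⟩ := hpos t
        have h2 := hreach _ le_rfl
        rw [h] at h2
        exact hv'' ⟨r, hr, h2.symm.trans h'⟩
      change Even {t | p^[m t] (pos t) = v}.ncard
      rw [this]; simp
    · have hres := hm3 v hv'
      exact hres

/-- Finite even token sets in a connected piece. -/
lemma route_finite {V τ : Type*} [Finite τ] (H : SimpleGraph V) (r : V) (pos : τ → V)
    (hpos : ∀ t, H.Reachable (pos t) r) (hτ : Even (Nat.card τ)) :
    ∃ fin : τ → V, Routes H.edgeSet pos fin ∧ ∀ v, Even {t | fin t = v}.ncard := by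
  classical
  obtain ⟨fin, h1, h2, -⟩ := route_to_roots H {r} pos (fun t => ⟨r, rfl, hpos t⟩)
  refine ⟨fin, h1, fun v => ?_⟩
  by_cases hv : v = r
  · subst hv
    have h3 : Even {t | fin t ≠ v}.ncard := by
      refine even_partition _ fin (fun i => ?_)
      by_cases hi : i = v
      · have : {t | t ∈ {t | fin t ≠ v} ∧ fin t = i} = ∅ := by
          ext t
          simp only [Set.mem_ofPred_eq, Set.mem_empty_iff_false, iff_false]
          rintro ⟨h, h'⟩; exact h (h'.trans hi)
        rw [this]; simp
      · have : {t | t ∈ {t | fin t ≠ v} ∧ fin t = i} = {t | fin t = i} := by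
          ext t
          simp only [Set.mem_ofPred_eq, and_iff_right_iff_imp]
          rintro rfl; exact hi
        rw [this]
        exact h2 i hi
    have h4 : {t | fin t = v}.ncard + {t | fin t ≠ v}.ncard = Nat.card τ :=
      Set.ncard_add_ncard_compl {t | fin t = v}
    rw [← h4, Nat.even_add] at hτ
    exact hτ.2 h3
  · exact h2 v hv

lemma first_hit {V : Type*} {H : SimpleGraph V} (X : Set V) {z x : V} (w : H.Walk z x)
    (hx : x ∈ X) : ∃ s ∈ X, ∃ w' : H.Walk z s, (∀ e ∈ w'.edges, e ∈ w.edges) ∧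
      ∀ e ∈ w'.edges, ∃ a ∈ e, a ∉ X := by
  induction w with
  | nil => exact ⟨_, hx, Walk.nil, by simp, by simp⟩
  | @cons u v y h p ih =>
    by_cases hu : u ∈ X
    · exact ⟨u, hu, Walk.nil, by simp, by simp⟩
    · obtain ⟨s, hs, w', h1, h2⟩ := ih hx
      refine ⟨s, hs, Walk.cons h w', ?_, ?_⟩
      · intro e he
        rw [Walk.edges_cons, List.mem_cons] at he ⊢
        exact he.imp_right (h1 e)
      · intro e he
        rw [Walk.edges_cons, List.mem_cons] at he
        rcases he with rfl | he
        · exact ⟨u, by simp, hu⟩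
        · exact h2 e he

lemma reach_of_edges {V : Type*} {H H' : SimpleGraph V} {a b : V} (w : H.Walk a b)
    (h : ∀ x y, s(x, y) ∈ w.edges → H'.Reachable x y) : H'.Reachable a b := by
  induction w with
  | nil => exact Reachable.refl _
  | @cons u v y hadj p ih =>
    refine (h u v (by simp)).trans (ih fun x y hxy => h x y ?_)
    rw [Walk.edges_cons]; exact List.mem_cons_of_mem _ hxy

/-- The set of bridge edges. -/
def br {V : Type*} (H : SimpleGraph V) : Set (Sym2 V) := {e | e ∈ H.edgeSet ∧ H.IsBridge e}

lemma br_delete_one {V : Type*} (H : SimpleGraph V) (e : Sym2 V) (h : (br H).Finite) :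
    (br (H.deleteEdges {e})).Finite := by
  by_cases he : H.IsBridge e
  · refine h.subset ?_
    rintro f ⟨hf, hfb⟩
    rw [edgeSet_deleteEdges] at hf
    refine ⟨hf.1, ?_⟩
    rw [isBridge_iff_forall_cycle_notMem hf.1]
    intro u p hp hfp
    have hep := he.notMem_edges_of_isCycle hp
    have hq : ∀ e' ∈ p.edges, e' ∈ (H.deleteEdges {e}).edgeSet := by
      intro e' he'
      rw [edgeSet_deleteEdges]
      exact ⟨p.edges_subset_edgeSet he', fun h => hep (h ▸ he')⟩
    refine hfb.notMem_edges_of_isCycle (hp.transfer hq) ?_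
    rw [Walk.edges_transfer]; exact hfp
  · induction e with | h u v =>
    rw [isBridge_iff, not_not, reachable_deleteEdges_iff_exists_walk] at he
    obtain ⟨w, hw⟩ := he
    refine (h.union w.edges.finite_toSet).subset ?_
    rintro f ⟨hf, hfb⟩
    rw [edgeSet_deleteEdges] at hf
    by_contra hcon
    simp only [Set.mem_union, not_or] at hcon
    obtain ⟨h1, h2⟩ := hcon
    have h3 : ¬ H.IsBridge f := fun h => h1 ⟨hf.1, h⟩
    induction f with | h a b =>
    rw [isBridge_iff, not_not, reachable_deleteEdges_iff_exists_walk] at h3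
    obtain ⟨p, hp⟩ := h3
    apply hfb
    have hadj : ∀ x y, H.Adj x y → s(x, y) ≠ s(u, v) → s(x, y) ≠ s(a, b) →
        ((H.deleteEdges {s(u, v)}).deleteEdges {s(a, b)}).Reachable x y := by
      intro x y hxy h1 h2
      refine Adj.reachable ?_
      rw [deleteEdges_adj, deleteEdges_adj]
      exact ⟨⟨hxy, h1⟩, h2⟩
    have hw' : ((H.deleteEdges {s(u, v)}).deleteEdges {s(a, b)}).Reachable u v :=
      reach_of_edges w fun x y hxy => hadj x y (w.adj_of_mem_edges hxy)
        (fun h => hw (h ▸ hxy)) (fun h => h2 (by rw [← h]; exact hxy))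
    refine reach_of_edges p fun x y hxy => ?_
    by_cases hxe : s(x, y) = s(u, v)
    · rcases Sym2.eq_iff.1 hxe with ⟨rfl, rfl⟩ | ⟨rfl, rfl⟩
      · exact hw'
      · exact hw'.symm
    · exact hadj x y (p.adj_of_mem_edges hxy) hxe (fun h => hp (h ▸ hxy))

lemma br_delete {V : Type*} (H : SimpleGraph V) (h : (br H).Finite) {F : Set (Sym2 V)}
    (hF : F.Finite) : (br (H.deleteEdges F)).Finite := by
  induction F, hF using Set.Finite.induction_on with
  | empty => simpa using h
  | @insert e F _ _ ih =>
    have := br_delete_one _ e ih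
    rwa [deleteEdges_deleteEdges, Set.union_singleton] at this

lemma br_delete_br {V : Type*} (H : SimpleGraph V) :
    ∀ e ∈ (H.deleteEdges (br H)).edgeSet, ¬ (H.deleteEdges (br H)).IsBridge e := by
  intro e he hb
  have he' := he
  rw [edgeSet_deleteEdges] at he'
  have h1 : ¬ H.IsBridge e := fun h => he'.2 ⟨he'.1, h⟩
  rw [isBridge_iff_forall_cycle_notMem he'.1] at h1
  push Not at h1
  obtain ⟨u, p, hp, hep⟩ := h1
  have hq : ∀ e' ∈ p.edges, e' ∈ (H.deleteEdges (br H)).edgeSet := by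
    intro e' he'
    rw [edgeSet_deleteEdges]
    exact ⟨p.edges_subset_edgeSet he', fun h => h.2.notMem_edges_of_isCycle hp he'⟩
  refine hb.notMem_edges_of_isCycle (hp.transfer hq) ?_
  rw [Walk.edges_transfer]; exact hep

lemma reach_three {V : Type*} (H : SimpleGraph V) (u v : V) {y x : V} (w : H.Walk y x) :
    (H.deleteEdges {s(u, v)}).Reachable y x ∨ (H.deleteEdges {s(u, v)}).Reachable y u ∨
      (H.deleteEdges {s(u, v)}).Reachable y v := by
  induction w with
  | nil => exact Or.inl (Reachable.refl _)
  | @cons a b c h p ih =>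
    by_cases he : s(a, b) = s(u, v)
    · rcases Sym2.eq_iff.1 he with ⟨rfl, rfl⟩ | ⟨rfl, rfl⟩
      · exact Or.inr (Or.inl (Reachable.refl _))
      · exact Or.inr (Or.inr (Reachable.refl _))
    · have hab : (H.deleteEdges {s(u, v)}).Reachable a b := by
        refine Adj.reachable ?_
        rw [deleteEdges_adj]; exact ⟨h, he⟩
      exact ih.imp hab.trans (Or.imp hab.trans hab.trans)

lemma pig_one {V : Type*} (H : SimpleGraph V) (T : Set V) (e : Sym2 V) (x : V)
    (h : {t | t ∈ T ∧ H.Reachable x t}.Infinite) :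
    ∃ y, H.Reachable x y ∧ {t | t ∈ T ∧ (H.deleteEdges {e}).Reachable y t}.Infinite := by
  induction e with | h u v =>
  have key : ∃ y, {t | (t ∈ T ∧ H.Reachable x t) ∧
      (H.deleteEdges {s(u, v)}).Reachable y t}.Infinite := by
    by_contra hcon
    push Not at hcon
    refine h ((((hcon x).union (hcon u)).union (hcon v)).subset ?_)
    intro t ht
    obtain ⟨w⟩ := ht.2.symm
    rcases reach_three H u v w with h' | h' | h'
    · exact Or.inl (Or.inl ⟨ht, h'.symm⟩)
    · exact Or.inl (Or.inr ⟨ht, h'.symm⟩)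
    · exact Or.inr ⟨ht, h'.symm⟩
  obtain ⟨y, hy⟩ := key
  obtain ⟨t, ht⟩ := hy.nonempty
  refine ⟨y, ht.1.2.trans (ht.2.mono (deleteEdges_le _)).symm, hy.mono ?_⟩
  rintro t ⟨⟨h1, _⟩, h2⟩
  exact ⟨h1, h2⟩

lemma pig {V : Type*} (H : SimpleGraph V) (T : Set V) {F : Set (Sym2 V)} (hF : F.Finite) (x : V)
    (h : {t | t ∈ T ∧ H.Reachable x t}.Infinite) :
    ∃ y, H.Reachable x y ∧ {t | t ∈ T ∧ (H.deleteEdges F).Reachable y t}.Infinite := by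
  induction F, hF using Set.Finite.induction_on with
  | empty => exact ⟨x, Reachable.refl _, by simpa using h⟩
  | @insert e F _ _ ih =>
    obtain ⟨y, hy, hyi⟩ := ih
    obtain ⟨z, hz, hzi⟩ := pig_one _ T e y hyi
    refine ⟨z, hy.trans (hz.mono (deleteEdges_le _)), ?_⟩
    rwa [deleteEdges_deleteEdges, Set.union_singleton] at hzi

lemma two_aux {V : Type*} [DecidableEq V] {H : SimpleGraph V} {x y z s : V} (R1 R2 : H.Walk x y)
    (hd : ∀ e ∈ R1.edges, e ∉ R2.edges) (hadj : H.Adj y z) (hs : s ∈ R1.support)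
    (S : H.Walk z s) (hS2 : ∀ e ∈ S.edges, e ∉ R2.edges) (hSe : s(y, z) ∉ S.edges)
    (he1 : s(y, z) ∉ (R1.takeUntil s hs).edges) :
    ∃ Q1 Q2 : H.Walk x z, ∀ e ∈ Q1.edges, e ∉ Q2.edges := by
  refine ⟨(R1.takeUntil s hs).append S.reverse, R2.concat hadj, ?_⟩
  intro e he he'
  rw [Walk.edges_append, List.mem_append, Walk.edges_reverse, List.mem_reverse] at he
  rw [Walk.edges_concat, List.concat_eq_append, List.mem_append, List.mem_singleton] at he'
  rcases he with he | he <;> rcases he' with he' | rfl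
  · exact hd e (R1.edges_takeUntil_subset_edges hs he) he'
  · exact he1 he
  · exact hS2 e he he'
  · exact hSe he

lemma two_aux' {V : Type*} [DecidableEq V] {H : SimpleGraph V} {x y z : V} (R1 R2 : H.Walk x y)
    (hp : R1.IsPath)
    (hd : ∀ e ∈ R1.edges, e ∉ R2.edges) (hadj : H.Adj y z) (he : s(y, z) ∈ R1.edges) :
    ∃ Q1 Q2 : H.Walk x z, ∀ e ∈ Q1.edges, e ∉ Q2.edges := by
  have hz := R1.snd_mem_support_of_mem_edges he
  refine two_aux R1 R2 hd hadj hz Walk.nil (by simp) (by simp) ?_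
  intro h
  exact Walk.endpoint_notMem_support_takeUntil hp hz hadj.ne (Walk.fst_mem_support_of_mem_edges _ h)

lemma two_paths {V : Type*} (H : SimpleGraph V) (hb : ∀ e ∈ H.edgeSet, ¬ H.IsBridge e) {x t : V}
    (h : H.Reachable x t) : ∃ Q1 Q2 : H.Walk x t, ∀ e ∈ Q1.edges, e ∉ Q2.edges := by
  classical
  rw [reachable_iff_reflTransGen] at h
  induction h with
  | refl => exact ⟨Walk.nil, Walk.nil, by simp⟩
  | @tail y z _ hadj ih =>
    obtain ⟨P1, P2, hP⟩ := ih
    obtain ⟨R1, R2, hp1, hp2, hd⟩ : ∃ R1 R2 : H.Walk x y, R1.IsPath ∧ R2.IsPath ∧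
        ∀ e ∈ R1.edges, e ∉ R2.edges :=
      ⟨P1.bypass, P2.bypass, P1.bypass_isPath, P2.bypass_isPath, fun e h1 h2 =>
        hP e (P1.edges_bypass_subset_edges h1) (P2.edges_bypass_subset_edges h2)⟩
    have hd' : ∀ e ∈ R2.edges, e ∉ R1.edges := fun e h1 h2 => hd e h2 h1
    by_cases h1 : s(y, z) ∈ R1.edges
    · exact two_aux' R1 R2 hp1 hd hadj h1
    by_cases h2 : s(y, z) ∈ R2.edges
    · exact two_aux' R2 R1 hp2 hd' hadj h2
    have h3 := hb s(y, z) hadj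
    rw [isBridge_iff, not_not, reachable_deleteEdges_iff_exists_walk] at h3
    obtain ⟨p, hp⟩ := h3
    obtain ⟨s, hs, w, hw1, hw2⟩ := first_hit {a | a ∈ R1.support ∨ a ∈ R2.support} p.reverse
      (Or.inl R1.end_mem_support)
    have hwe : s(y, z) ∉ w.edges := fun h => hp (by simpa using hw1 _ h)
    have hwR1 : ∀ e ∈ w.edges, e ∉ R1.edges := fun e he he' => by
      obtain ⟨a, ha, haX⟩ := hw2 e he
      exact haX (Or.inl (Walk.mem_support_of_mem_edges he' ha))
    have hwR2 : ∀ e ∈ w.edges, e ∉ R2.edges := fun e he he' => by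
      obtain ⟨a, ha, haX⟩ := hw2 e he
      exact haX (Or.inr (Walk.mem_support_of_mem_edges he' ha))
    rcases hs with hs | hs
    · exact two_aux R1 R2 hd hadj hs w hwR2 hwe (fun h => h1 (R1.edges_takeUntil_subset_edges hs h))
    · exact two_aux R2 R1 hd' hadj hs w hwR1 hwe
        (fun h => h2 (R2.edges_takeUntil_subset_edges hs h))

lemma step_aux {V : Type*} [DecidableEq V] {H H1 H2 : SimpleGraph V} (h1 : H1 ≤ H)
    {x s t a : V} (S : H.Walk x s) (R1 R2 : H1.Walk s t) (hd : ∀ e ∈ R1.edges, e ∉ R2.edges)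
    (hS1 : ∀ e ∈ S.edges, e ∉ R1.edges)
    (hF1 : ∀ e ∈ R1.edges, e ∉ H2.edgeSet) (hF2 : ∀ e ∈ R2.edges, e ∉ H2.edgeSet)
    (hFS : ∀ e ∈ S.edges, e ∉ H2.edgeSet) (ha : a ∈ R1.support) :
    ∃ (W1 : H.Walk x t) (W2 : H.Walk t a), (∀ e ∈ W1.edges, e ∉ W2.edges) ∧
      (∀ e ∈ W1.edges, e ∉ H2.edgeSet) ∧ (∀ e ∈ W2.edges, e ∉ H2.edgeSet) := by
  refine ⟨S.append (R2.mapLe h1), ((R1.dropUntil a ha).reverse).mapLe h1, ?_, ?_, ?_⟩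
  · intro e he he'
    rw [Walk.edges_append, List.mem_append, Walk.edges_mapLe_eq_edges] at he
    rw [Walk.edges_mapLe_eq_edges, Walk.edges_reverse, List.mem_reverse] at he'
    have he'' := R1.edges_dropUntil_subset_edges ha he'
    rcases he with he | he
    · exact hS1 e he he''
    · exact hd e he'' he
  · intro e he
    rw [Walk.edges_append, List.mem_append, Walk.edges_mapLe_eq_edges] at he
    exact he.elim (hFS e) (hF2 e)
  · intro e he
    rw [Walk.edges_mapLe_eq_edges, Walk.edges_reverse, List.mem_reverse] at he
    exact hF1 e (R1.edges_dropUntil_subset_edges ha he)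

lemma step {V : Type*} (H : SimpleGraph V) (T : Set V) {N : Set V} (hN : N.Finite) (x : V)
    (hb : (br H).Finite) (hi : {t | t ∈ T ∧ H.Reachable x t}.Infinite) :
    ∃ t, t ∈ T ∧ t ∉ N ∧ ∃ (a : V) (H' : SimpleGraph V), H' ≤ H ∧ (br H').Finite ∧
      {t | t ∈ T ∧ H'.Reachable a t}.Infinite ∧ ∃ (W1 : H.Walk x t) (W2 : H.Walk t a),
      (∀ e ∈ W1.edges, e ∉ W2.edges) ∧
      (∀ e ∈ W1.edges, e ∉ H'.edgeSet) ∧ (∀ e ∈ W2.edges, e ∉ H'.edgeSet) := by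
  classical
  obtain ⟨x1, hx1, hi1⟩ := pig H T hb x hi
  have hnb := br_delete_br H
  have hb1 := br_delete H hb hb
  have hle1 : H.deleteEdges (br H) ≤ H := deleteEdges_le _
  generalize H.deleteEdges (br H) = H1 at *
  obtain ⟨w0⟩ := hx1
  obtain ⟨s, hs, S, -, hS⟩ := first_hit {y | H1.Reachable x1 y} w0 (Reachable.refl _)
  obtain ⟨t, ht, htN⟩ := (hi1.sdiff hN).nonempty
  have hs' : H1.Reachable x1 s := hs
  obtain ⟨R1, R2, hd⟩ := two_paths H1 hnb (hs'.symm.trans ht.2)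
  have hX : ∀ {y z} (w : H1.Walk y z), H1.Reachable x1 y → ∀ e ∈ S.edges, e ∉ w.edges := by
    intro y z w hy e he he'
    obtain ⟨a, ha, haX⟩ := hS e he
    exact haX (hy.trans ⟨w.takeUntil a (Walk.mem_support_of_mem_edges he' ha)⟩)
  have hFfin : {e | e ∈ R1.edges ∨ e ∈ R2.edges ∨ e ∈ S.edges}.Finite :=
    R1.edges.finite_toSet.union (R2.edges.finite_toSet.union S.edges.finite_toSet)
  obtain ⟨x2, hx2, hi2⟩ := pig H1 T hFfin x1 hi1
  have hb2 := br_delete H1 hb1 hFfin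
  obtain ⟨w2⟩ := hx2.symm.trans hs'
  obtain ⟨a, ha, w, -, hw⟩ := first_hit {a | a ∈ R1.support ∨ a ∈ R2.support} w2
    (Or.inl R1.start_mem_support)
  have hnotin : ∀ e, (e ∈ R1.edges ∨ e ∈ R2.edges ∨ e ∈ S.edges) →
      e ∉ (H1.deleteEdges {e | e ∈ R1.edges ∨ e ∈ R2.edges ∨ e ∈ S.edges}).edgeSet := by
    intro e he he'
    rw [edgeSet_deleteEdges] at he'
    exact he'.2 he
  have hxa : (H1.deleteEdges {e | e ∈ R1.edges ∨ e ∈ R2.edges ∨ e ∈ S.edges}).Reachable x2 a := by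
    refine reach_of_edges w fun y z hyz => Adj.reachable ?_
    rw [deleteEdges_adj]
    refine ⟨w.adj_of_mem_edges hyz, ?_⟩
    obtain ⟨b, hb, hbX⟩ := hw _ hyz
    rintro (h | h | h)
    · exact hbX (Or.inl (Walk.mem_support_of_mem_edges h hb))
    · exact hbX (Or.inr (Walk.mem_support_of_mem_edges h hb))
    · exact hX w hx2 _ h hyz
  have hle2 := (deleteEdges_le (G := H1) {e | e ∈ R1.edges ∨ e ∈ R2.edges ∨ e ∈ S.edges})
  generalize H1.deleteEdges {e | e ∈ R1.edges ∨ e ∈ R2.edges ∨ e ∈ S.edges} = H2 at *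
  refine ⟨t, ht.1, htN, a, H2, hle2.trans hle1, hb2, hi2.mono ?_, ?_⟩
  · rintro t ⟨h, h'⟩
    exact ⟨h, hxa.symm.trans h'⟩
  rcases ha with ha | ha
  · exact step_aux hle1 S R1 R2 hd (hX R1 hs') (fun e he => hnotin e (Or.inl he))
      (fun e he => hnotin e (Or.inr (Or.inl he))) (fun e he => hnotin e (Or.inr (Or.inr he))) ha
  · exact step_aux hle1 S R2 R1 (fun e h h' => hd e h' h) (hX R2 hs')
      (fun e he => hnotin e (Or.inr (Or.inl he))) (fun e he => hnotin e (Or.inl he))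
      (fun e he => hnotin e (Or.inr (Or.inr he))) ha

/-- State of the ray construction. -/
structure KS {V : Type*} (G : SimpleGraph V) (T : Set V) where
  H : SimpleGraph V
  le : H ≤ G
  x : V
  N : Set V
  hN : N.Finite
  hb : (br H).Finite
  hi : {t | t ∈ T ∧ H.Reachable x t}.Infinite

lemma key {V : Type*} (G : SimpleGraph V) (hG : G.Connected) (hb : (br G).Finite) (T : Set V)
    (hT : T.Infinite) : ∃ (t : ℕ → V) (W : ∀ n, G.Walk (t n) (t (n + 1))),
      Function.Injective t ∧ (∀ n, t n ∈ T) ∧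
      ∀ m n, m ≠ n → ∀ e ∈ (W m).edges, e ∉ (W n).edges := by
  classical
  have hstep := fun s : KS G T => step s.H T s.hN s.x s.hb s.hi
  choose tt h1 h2 a H' h3 h4 h5 W1 W2 h6 h7 h8 using hstep
  obtain ⟨x0⟩ := hG.nonempty
  let nx : KS G T → KS G T := fun s => ⟨H' s, (h3 s).trans s.le, a s, insert (tt s) s.N,
    s.hN.insert _, h4 s, h5 s⟩
  let s0 : KS G T := ⟨G, le_rfl, x0, ∅, Set.finite_empty, hb, by
    refine hT.mono fun t ht => ⟨ht, hG.preconnected _ _⟩⟩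
  obtain ⟨S, hS⟩ : ∃ S : ℕ → KS G T, ∀ n, S (n + 1) = nx (S n) :=
    ⟨fun n => Nat.rec s0 (fun _ s => nx s) n, fun n => rfl⟩
  have hH : Antitone fun n => (S n).H := antitone_nat_of_succ_le fun n => by
    rw [hS]; exact h3 _
  have hN : Monotone fun n => (S n).N := monotone_nat_of_le_succ fun n => by
    rw [hS]; exact Set.subset_insert _ _
  have hne : ∀ m n, m < n → tt (S m) ≠ tt (S n) := by
    intro m n hmn he
    apply h2 (S n)
    rw [← he]
    have : tt (S m) ∈ (S (m + 1)).N := by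
      rw [hS]; exact Set.mem_insert _ _
    exact hN (Nat.succ_le_of_lt hmn) this
  have hW : ∀ n, ∃ W : G.Walk (tt (S n)) (tt (S (n + 1))), ∀ e, e ∈ W.edges →
      e ∈ (W2 (S n)).edges ∨ e ∈ (W1 (S (n + 1))).edges := by
    intro n
    have : a (S n) = (S (n + 1)).x := by rw [hS]
    refine ⟨((W2 (S n)).mapLe (S n).le).append
      (((W1 (S (n + 1))).mapLe (S (n + 1)).le).copy this.symm rfl), ?_⟩
    intro e he
    rw [Walk.edges_append, List.mem_append, Walk.edges_copy, Walk.edges_mapLe_eq_edges,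
      Walk.edges_mapLe_eq_edges] at he
    exact he
  choose W hW using hW
  have h7' : ∀ n e, e ∈ (W1 (S n)).edges → e ∉ (S (n + 1)).H.edgeSet := by
    intro n e he; rw [hS]; exact h7 _ e he
  have h8' : ∀ n e, e ∈ (W2 (S n)).edges → e ∉ (S (n + 1)).H.edgeSet := by
    intro n e he; rw [hS]; exact h8 _ e he
  have hup : ∀ m n, m ≤ n → ∀ e ∈ (S n).H.edgeSet, e ∈ (S m).H.edgeSet := fun m n hmn e he =>
    edgeSet_mono (hH hmn) he
  have hdis : ∀ m n, m < n → ∀ e ∈ (W m).edges, e ∉ (W n).edges := by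
    intro m n hmn e he he'
    rcases hW m e he with he | he <;> rcases hW n e he' with he' | he'
    · exact h8' m e he (hup _ n (by omega) e ((W2 (S n)).edges_subset_edgeSet he'))
    · exact h8' m e he (hup _ (n + 1) (by omega) e ((W1 (S (n + 1))).edges_subset_edgeSet he'))
    · rcases (show n = m + 1 ∨ m + 2 ≤ n by omega) with rfl | h
      · exact h6 _ e he he'
      · exact h7' (m + 1) e he (hup _ n h e ((W2 (S n)).edges_subset_edgeSet he'))
    · exact h7' (m + 1) e he
        (hup _ (n + 1) (by omega) e ((W1 (S (n + 1))).edges_subset_edgeSet he'))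
  refine ⟨fun n => tt (S n), W, ?_, fun n => h1 _, ?_⟩
  · intro m n h
    by_contra hmn
    rcases lt_or_gt_of_ne hmn with hlt | hlt
    · exact hne m n hlt h
    · exact hne n m hlt h.symm
  · intro m n hmn e he he'
    rcases lt_or_gt_of_ne hmn with hlt | hlt
    · exact hdis m n hlt e he he'
    · exact hdis n m hlt e he' he

lemma lift_walk {V : Type*} {G : SimpleGraph V} {A : Set V} (K : SimpleGraph A) {a b : V}
    (w : G.Walk a b) (hw : ∀ x ∈ w.support, x ∈ A)
    (hK : ∀ x y (hx : x ∈ A) (hy : y ∈ A), s(x, y) ∈ w.edges → K.Adj ⟨x, hx⟩ ⟨y, hy⟩)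
    (ha : a ∈ A) (hb : b ∈ A) : K.Reachable ⟨a, ha⟩ ⟨b, hb⟩ := by
  induction w with
  | nil => exact Reachable.refl _
  | @cons u v y h p ih =>
    have hv : v ∈ A := hw v (by simp)
    refine (hK u v ha hv (by simp)).reachable.trans (ih ?_ ?_ hv hb)
    · intro x hx; exact hw x (by simp [hx])
    · intro x y hx hy hxy; exact hK x y hx hy (by simp [hxy])

lemma comp_is {V : Type*} (G : SimpleGraph V) (v : V) :
    G.IsTwoEdgeConnectedComponent {w | G.IsEdgeReachable 2 v w} := by
  classical
  have hsup : ∀ {a b} (w : G.Walk a b), a ∈ {w | G.IsEdgeReachable 2 v w} →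
      b ∈ {w | G.IsEdgeReachable 2 v w} → ∀ x ∈ w.bypass.support,
      x ∈ {w | G.IsEdgeReachable 2 v w} := by
    intro a b w ha hb x hx
    have ha' : G.IsEdgeReachable 2 v a := ha
    have hb' : G.IsEdgeReachable 2 v b := hb
    exact ha'.trans (w.bypass_isPath.isTrail.isEdgeReachable_two_of_isEdgeReachable_two
      (ha'.symm.trans hb') (Walk.start_mem_support _) hx)
  have hne : Nonempty {w | G.IsEdgeReachable 2 v w} := ⟨⟨v, IsEdgeReachable.refl v⟩⟩
  refine ⟨⟨?_, ?_⟩, ?_⟩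
  · refine ⟨?_⟩
    rintro ⟨a, ha⟩ ⟨b, hb⟩
    have ha' : G.IsEdgeReachable 2 v a := ha
    have hb' : G.IsEdgeReachable 2 v b := hb
    obtain ⟨w⟩ := (ha'.symm.trans hb').reachable (by simp)
    refine lift_walk _ w.bypass (hsup w ha hb) ?_ ha hb
    intro x y hx hy hxy
    exact w.bypass.adj_of_mem_edges hxy
  · intro e he
    induction e with | h x y =>
    obtain ⟨x, hx⟩ := x
    obtain ⟨y, hy⟩ := y
    refine ⟨?_⟩
    rintro ⟨a, ha⟩ ⟨b, hb⟩
    have ha' : G.IsEdgeReachable 2 v a := ha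
    have hb' : G.IsEdgeReachable 2 v b := hb
    have hr := isEdgeReachable_two.1 (ha'.symm.trans hb') s(x, y)
    rw [reachable_deleteEdges_iff_exists_walk] at hr
    obtain ⟨w, hw⟩ := hr
    refine lift_walk _ w.bypass (hsup w ha hb) ?_ ha hb
    intro c d hc hd hcd
    rw [deleteEdges_adj]
    refine ⟨w.bypass.adj_of_mem_edges hcd, ?_⟩
    intro h
    have h' : s(c, d) = s(x, y) := by
      have := congrArg (Sym2.map Subtype.val) (Set.mem_singleton_iff.1 h)
      simpa using this
    exact hw (h' ▸ w.edges_bypass_subset_edges hcd)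
  · intro S hS h2
    refine Set.Subset.antisymm ?_ hS
    intro w hw
    have hv : v ∈ S := hS (IsEdgeReachable.refl v)
    change G.IsEdgeReachable 2 v w
    rw [isEdgeReachable_two]
    intro e
    induction e with | h x y =>
    by_cases hxy : ∃ (hx : x ∈ S) (hy : y ∈ S), G.Adj x y
    · obtain ⟨hx, hy, hadj⟩ := hxy
      have hc := (h2.2 s(⟨x, hx⟩, ⟨y, hy⟩) hadj).preconnected ⟨v, hv⟩ ⟨w, hw⟩
      let f : ((G.induce S).deleteEdges {s(⟨x, hx⟩, ⟨y, hy⟩)}) →g (G.deleteEdges {s(x, y)}) :=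
        ⟨Subtype.val, by
          rintro ⟨c, hc⟩ ⟨d, hd⟩ h
          rw [deleteEdges_adj] at h ⊢
          refine ⟨h.1, fun h' => h.2 ?_⟩
          rw [Set.mem_singleton_iff, Sym2.eq_iff] at h' ⊢
          simpa using h'⟩
      exact hc.map f
    · have hc := h2.1.preconnected ⟨v, hv⟩ ⟨w, hw⟩
      let f : (G.induce S) →g (G.deleteEdges {s(x, y)}) :=
        ⟨Subtype.val, by
          rintro ⟨c, hc⟩ ⟨d, hd⟩ h
          rw [deleteEdges_adj]
          refine ⟨h, fun h' => hxy ?_⟩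
          have h'' : G.Adj c d := h
          rw [Set.mem_singleton_iff, Sym2.eq_iff] at h'
          rcases h' with ⟨rfl, rfl⟩ | ⟨rfl, rfl⟩
          · exact ⟨hc, hd, h''⟩
          · exact ⟨hd, hc, h''.symm⟩⟩
      exact hc.map f

lemma br_finite {V : Type*} (G : SimpleGraph V)
    (hfin : {S : Set V | G.IsTwoEdgeConnectedComponent S}.Finite) : (br G).Finite := by
  have hrep : ∀ e : Sym2 V, ∃ a b, e = s(a, b) := fun e => by
    induction e with | h a b => exact ⟨a, b, rfl⟩
  choose l r hlr using hrep
  let f : Sym2 V → Set V × Set V := fun e =>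
    ({w | G.IsEdgeReachable 2 (l e) w}, {w | G.IsEdgeReachable 2 (r e) w})
  refine Set.Finite.of_finite_image (f := f) ((hfin.prod hfin).subset ?_) ?_
  · rintro _ ⟨e, _, rfl⟩
    exact ⟨comp_is G _, comp_is G _⟩
  · intro e he e' he' h
    by_contra hne
    simp only [f, Prod.mk.injEq] at h
    have h1 : G.IsEdgeReachable 2 (l e) (l e') := by
      have : l e' ∈ {w | G.IsEdgeReachable 2 (l e') w} := IsEdgeReachable.refl _
      rw [← h.1] at this; exact this
    have h2 : G.IsEdgeReachable 2 (r e) (r e') := by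
      have : r e' ∈ {w | G.IsEdgeReachable 2 (r e') w} := IsEdgeReachable.refl _
      rw [← h.2] at this; exact this
    have hb := he.2
    rw [hlr e, isBridge_iff] at hb
    apply hb
    refine (isEdgeReachable_two.1 h1 _).trans (Reachable.trans (Adj.reachable ?_)
      (isEdgeReachable_two.1 h2.symm _))
    rw [deleteEdges_adj, ← hlr e, ← hlr e', Set.mem_singleton_iff]
    refine ⟨?_, fun h => hne h.symm⟩
    have := he'.1
    rw [hlr e'] at this
    exact this

lemma ncard_subtype {τ : Type*} (P Q : τ → Prop) :
    {t : {t // P t} | Q t}.ncard = {t | Q t ∧ P t}.ncard := by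
  rw [← Set.ncard_image_of_injective _ Subtype.val_injective]
  congr 1
  ext t
  simp only [Set.mem_image, Set.mem_ofPred_eq, Subtype.exists]
  constructor
  · rintro ⟨a, h, h', rfl⟩; exact ⟨h', h⟩
  · rintro ⟨h', h⟩; exact ⟨t, h, h', rfl⟩

lemma support_reach {V : Type*} {G : SimpleGraph V} {a b v : V} (w : G.Walk a b)
    (hv : v ∈ w.support) : (fromEdgeSet {e | e ∈ w.edges}).Reachable v a := by
  classical
  refine (reach_of_edges (w.takeUntil v hv) fun x y hxy => Adj.reachable ?_).symm
  rw [fromEdgeSet_adj]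
  exact ⟨w.edges_takeUntil_subset_edges hv hxy, ((w.takeUntil v hv).adj_of_mem_edges hxy).ne⟩

theorem main_thm {V : Type u} (G : SimpleGraph V) (hG : G.Connected) (T : Set V) (t : ℕ → V)
    (W : ∀ n, G.Walk (t n) (t (n + 1))) (hinj : Function.Injective t) (htT : ∀ n, t n ∈ T)
    (hdisj : ∀ m n, m ≠ n → ∀ e ∈ (W m).edges, e ∉ (W n).edges) : G.HasTJoin T := by
  classical
  obtain ⟨VK, hVK⟩ : ∃ VK : Set V, ∀ v, v ∈ VK ↔ ∃ n, v ∈ (W n).support := ⟨_, fun _ => Iff.rfl⟩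
  obtain ⟨EU, hEU⟩ : ∃ EU : Set (Sym2 V), ∀ e, e ∈ EU ↔ ∃ n, e ∈ (W n).edges :=
    ⟨_, fun _ => Iff.rfl⟩
  -- stage 1
  obtain ⟨mid, hr1, hev, hstay⟩ := route_to_roots (G.deleteEdges EU) VK (fun x : T => (x : V)) (by
    intro x
    obtain ⟨w⟩ := hG.preconnected (x : V) (t 0)
    obtain ⟨s, hs, w', -, hw'⟩ := first_hit VK w ((hVK _).2 ⟨0, Walk.start_mem_support _⟩)
    refine ⟨s, hs, reach_of_edges w' fun a b hab => Adj.reachable ?_⟩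
    rw [deleteEdges_adj]
    refine ⟨w'.adj_of_mem_edges hab, fun h => ?_⟩
    obtain ⟨n, hn⟩ := (hEU _).1 h
    obtain ⟨c, hc, hcV⟩ := hw' _ hab
    exact hcV ((hVK _).2 ⟨n, Walk.mem_support_of_mem_edges hn hc⟩))
  obtain ⟨tn, htn⟩ : ∃ tn : ℕ → T, ∀ n, (tn n : V) = t n := ⟨fun n => ⟨t n, htT n⟩, fun _ => rfl⟩
  have htinj : ∀ m n, tn m = tn n → m = n := fun m n h => hinj (by rw [← htn, ← htn, h])
  have hmidt : ∀ n, mid (tn n) = t n := by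
    intro n
    have := hstay (tn n) ((hVK _).2 ⟨n, by rw [htn]; exact Walk.start_mem_support _⟩)
    rw [this, htn]
  have htVK : ∀ n, t n ∈ VK := fun n => (hVK _).2 ⟨n, Walk.start_mem_support _⟩
  obtain ⟨B, hB⟩ : ∃ B : V → Set T, ∀ v x, x ∈ B v ↔ (∀ n, x ≠ tn n) ∧ mid x = v :=
    ⟨fun v => {x | (∀ n, x ≠ tn n) ∧ mid x = v}, fun _ _ => Iff.rfl⟩
  have hc : ∀ v, ∃ c : T, ¬ Even (B v).ncard → c ∈ B v := by
    intro v
    by_cases h : Even (B v).ncard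
    · exact ⟨tn 0, fun h' => absurd h h'⟩
    · obtain ⟨c, hc⟩ := nonempty_of_not_even h
      exact ⟨c, fun _ => hc⟩
  choose c hc using hc
  have hσ : ∀ v, ∃ n, v ∈ VK → v ∈ (W n).support := by
    intro v
    by_cases h : v ∈ VK
    · obtain ⟨n, hn⟩ := (hVK v).1 h
      exact ⟨n, fun _ => hn⟩
    · exact ⟨0, fun h' => absurd h' h⟩
  choose σ hσ using hσ
  obtain ⟨A, hA⟩ : ∃ A : T → Prop, ∀ x, A x ↔ (∀ n, x ≠ tn n) ∧ mid x ∈ VK ∧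
      ¬ Even (B (mid x)).ncard ∧ x = c (mid x) := ⟨_, fun _ => Iff.rfl⟩
  obtain ⟨Y, hY⟩ : ∃ Y : ℕ → Prop → Set T, ∀ n P x, x ∈ Y n P ↔
      (A x ∧ σ (mid x) = n) ∨ (x = tn n ∧ ¬ P) :=
    ⟨fun n P => {x | (A x ∧ σ (mid x) = n) ∨ (x = tn n ∧ ¬ P)}, fun _ _ _ => Iff.rfl⟩
  obtain ⟨s, hs0, hs⟩ : ∃ s : ℕ → Prop, ¬ s 0 ∧ ∀ n, s (n + 1) ↔ ¬ Even (Y n (s n)).ncard :=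
    ⟨fun n => Nat.rec False (fun n P => ¬ Even (Y n P).ncard) n, fun h => h, fun n => Iff.rfl⟩
  obtain ⟨Z, hZ⟩ : ∃ Z : ℕ → Set T, ∀ n x, x ∈ Z n ↔ x ∈ Y n (s n) ∨ (x = tn (n + 1) ∧ s (n + 1)) :=
    ⟨fun n => {x | x ∈ Y n (s n) ∨ (x = tn (n + 1) ∧ s (n + 1))}, fun _ _ => Iff.rfl⟩
  have hAt : ∀ n, ¬ A (tn n) := fun n h => ((hA _).1 h).1 n rfl
  have hZeven : ∀ n, Even (Z n).ncard := by
    intro n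
    by_cases h : s (n + 1)
    · have : Z n = insert (tn (n + 1)) (Y n (s n)) := by
        ext x; rw [hZ, Set.mem_insert_iff]; tauto
      rw [this]
      refine even_insert ((hs n).1 h) ?_
      rw [hY]
      rintro (h' | h')
      · exact hAt _ h'.1
      · have := htinj _ _ h'.1; omega
    · have : Z n = Y n (s n) := by
        ext x; rw [hZ]; tauto
      rw [this]
      by_contra h'
      exact h ((hs n).2 h')
  have hZdis : ∀ x m n, x ∈ Z m → x ∈ Z n → m = n := by
    intro x m n hm hn
    rw [hZ, hY] at hm hn
    rcases hm with (⟨h1, h2⟩ | ⟨h1, h2⟩) | ⟨h1, h2⟩ <;>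
      rcases hn with (⟨h3, h4⟩ | ⟨h3, h4⟩) | ⟨h3, h4⟩
    · rw [← h2, ← h4]
    · exact absurd (h3 ▸ h1) (hAt _)
    · exact absurd (h3 ▸ h1) (hAt _)
    · exact absurd (h1 ▸ h3) (hAt _)
    · exact htinj _ _ (h1.symm.trans h3)
    · have := htinj _ _ (h1.symm.trans h3)
      exact absurd (this ▸ h4) h2
    · exact absurd (h1 ▸ h3) (hAt _)
    · have := htinj _ _ (h1.symm.trans h3)
      exact absurd (this ▸ h2) h4
    · have := htinj _ _ (h1.symm.trans h3)
      omega
  have hZsup : ∀ n x, x ∈ Z n → mid x ∈ (W n).support := by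
    intro n x hx
    rw [hZ, hY] at hx
    rcases hx with (⟨h1, h2⟩ | ⟨h1, h2⟩) | ⟨h1, h2⟩
    · rw [← h2]; exact hσ _ ((hA x).1 h1).2.1
    · rw [h1, hmidt]; exact Walk.start_mem_support _
    · rw [h1, hmidt]; exact Walk.end_mem_support _
  have hZfin : ∀ n, (Z n).Finite := by
    intro n
    have h1 : {x | A x ∧ σ (mid x) = n}.Finite := by
      refine Set.Finite.of_finite_image (f := mid)
        ((W n).support.finite_toSet.subset ?_) ?_
      · rintro _ ⟨x, ⟨hx, hx'⟩, rfl⟩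
        rw [← hx']
        exact hσ _ ((hA x).1 hx).2.1
      · rintro x ⟨hx, _⟩ y ⟨hy, _⟩ h
        rw [((hA x).1 hx).2.2.2, ((hA y).1 hy).2.2.2, h]
    refine (h1.union (Set.toFinite {tn n, tn (n + 1)})).subset ?_
    intro x hx
    rw [hZ, hY] at hx
    rcases hx with (h | ⟨h, _⟩) | ⟨h, _⟩
    · exact Or.inl h
    · right; simp [h]
    · right; simp [h]
  have htZ : ∀ n, ∃ m, tn n ∈ Z m := by
    intro n
    by_cases h : s n
    · cases n with
      | zero => exact absurd h hs0
      | succ n => exact ⟨n, (hZ _ _).2 (Or.inr ⟨rfl, h⟩)⟩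
    · exact ⟨n, (hZ _ _).2 (Or.inl ((hY _ _ _).2 (Or.inr ⟨rfl, h⟩)))⟩
  have hnone : ∀ x, (∃ n, x ∈ Z n) ↔ (∃ n, x = tn n) ∨ A x := by
    intro x
    constructor
    · rintro ⟨n, hn⟩
      rw [hZ, hY] at hn
      rcases hn with (h | ⟨h, _⟩) | ⟨h, _⟩
      · exact Or.inr h.1
      · exact Or.inl ⟨_, h⟩
      · exact Or.inl ⟨_, h⟩
    · rintro (⟨n, rfl⟩ | h)
      · exact htZ n
      · exact ⟨σ (mid x), (hZ _ _).2 (Or.inl ((hY _ _ _).2 (Or.inl ⟨h, rfl⟩)))⟩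
  obtain ⟨g, hg1, hg2⟩ : ∃ g : T → Option ℕ, (∀ x n, g x = some n ↔ x ∈ Z n) ∧
      ∀ x, g x = none ↔ ¬ ∃ n, x ∈ Z n := by
    refine ⟨fun x => if h : ∃ n, x ∈ Z n then some h.choose else none, ?_, ?_⟩
    · intro x n
      by_cases h : ∃ n, x ∈ Z n
      · simp only [dif_pos h, Option.some.injEq]
        constructor
        · intro h'; rw [← h']; exact h.choose_spec
        · intro h'; exact hZdis x _ _ h.choose_spec h'
      · simp only [dif_neg h]
        constructor
        · intro h'; cases h'
        · intro h'; exact absurd ⟨n, h'⟩ h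
    · intro x
      by_cases h : ∃ n, x ∈ Z n
      · simp [h]
      · simp [h]
  -- stage 2
  obtain ⟨F, hF0, hF⟩ : ∃ F : Option ℕ → Set (Sym2 V), F none = ∅ ∧
      ∀ n, F (some n) = (fromEdgeSet {e | e ∈ (W n).edges}).edgeSet :=
    ⟨fun i => i.elim ∅ fun n => (fromEdgeSet {e | e ∈ (W n).edges}).edgeSet, rfl, fun _ => rfl⟩
  have hFsub : ∀ n e, e ∈ F (some n) → e ∈ (W n).edges := by
    intro n e he
    rw [hF, edgeSet_fromEdgeSet] at he
    exact he.1
  have hpart : ∀ i, ∃ fin : {x // g x = i} → V, Routes (F i) (fun x : {x // g x = i} => mid x) fin ∧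
      ∀ v, Even {x | fin x = v}.ncard := by
    intro i
    cases i with
    | none =>
      refine ⟨fun x => mid x, ⟨fun _ => ∅, by simp, by simp, fun _ => Reachable.refl _⟩, ?_⟩
      intro v
      rw [ncard_subtype (fun x => g x = none) (fun x => mid x = v)]
      have hset : ∀ x, x ∈ {x | mid x = v ∧ g x = none} ↔ x ∈ B v ∧ ¬ A x := by
        intro x
        rw [Set.mem_ofPred_eq, hg2, hnone, hB]
        push Not
        tauto
      by_cases hv : v ∈ VK
      · by_cases hBe : Even (B v).ncard
        · have : {x | mid x = v ∧ g x = none} = B v := by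
            ext x
            rw [hset]
            refine ⟨fun h => h.1, fun h => ⟨h, fun h' => ?_⟩⟩
            have h1 := ((hA x).1 h').2.2.1
            rw [((hB v x).1 h).2] at h1
            exact h1 hBe
          rw [this]; exact hBe
        · have : {x | mid x = v ∧ g x = none} = B v \ {c v} := by
            ext x
            rw [hset, Set.mem_sdiff, Set.mem_singleton_iff]
            refine and_congr_right fun h => not_congr ?_
            obtain ⟨h1, h2⟩ := (hB v x).1 h
            rw [hA, h2]
            tauto
          rw [this]
          exact even_diff hBe (hc v hBe)
      · have : {x | mid x = v ∧ g x = none} = {x | mid x = v} := by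
          ext x
          rw [hset, hB, Set.mem_ofPred_eq]
          refine ⟨fun h => h.1.2, fun h => ⟨⟨fun n hn => hv ?_, h⟩, fun h' => hv ?_⟩⟩
          · rw [← h, hn, hmidt]; exact htVK n
          · rw [← h]; exact ((hA x).1 h').2.1
        rw [this]
        exact hev v hv
    | some n =>
      have hZn : {x | g x = some n} = Z n := by ext x; exact hg1 x n
      have hfinite : Finite {x // g x = some n} := by
        have : {x | g x = some n}.Finite := hZn ▸ hZfin n
        exact this.to_subtype
      rw [hF]
      refine route_finite (fromEdgeSet {e | e ∈ (W n).edges}) (t n) _ ?_ ?_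
      · rintro ⟨x, hx⟩
        exact support_reach (W n) (hZsup n x ((hg1 x n).1 hx))
      · have : Nat.card {x // g x = some n} = {x | g x = some n}.ncard :=
          Nat.card_coe_set_eq {x | g x = some n}
        rw [this, hZn]
        exact hZeven n
  choose fi hfi1 hfi2 using hpart
  obtain ⟨fin, hfin⟩ : ∃ fin : T → V, ∀ i, (fun x : {x // g x = i} => fin x) = fi i := by
    refine ⟨fun x => fi (g x) ⟨x, rfl⟩, fun i => ?_⟩
    funext x
    obtain ⟨x, rfl⟩ := x
    rfl
  have hr2 : Routes EU mid fin := by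
    refine Routes.par F ?_ ?_ g ?_
    · intro i j hij
      rw [Set.disjoint_left]
      intro e he he'
      cases i with
      | none => rw [hF0] at he; exact he
      | some m =>
        cases j with
        | none => rw [hF0] at he'; exact he'
        | some n =>
          exact hdisj m n (fun h => hij (by rw [h])) e (hFsub m e he) (hFsub n e he')
    · intro i e he
      cases i with
      | none => rw [hF0] at he; exact absurd he (Set.notMem_empty e)
      | some m => exact (hEU e).2 ⟨m, hFsub m e he⟩
    · intro i
      rw [hfin i]
      exact hfi1 i
  refine hasTJoin_of_routes G T fin (Routes.comp hr1 hr2 ?_ ?_ ?_) ?_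
  · rw [Set.disjoint_left]
    intro e he he'
    rw [edgeSet_deleteEdges] at he
    exact he.2 he'
  · rw [edgeSet_deleteEdges]; exact Set.sdiff_subset
  · intro e he
    obtain ⟨n, hn⟩ := (hEU e).1 he
    exact (W n).edges_subset_edgeSet hn
  · intro v
    refine even_partition _ g fun i => ?_
    have := hfi2 i v
    rw [← hfin i] at this
    rw [ncard_subtype (fun x => g x = i) (fun x => fin x = v)] at this
    exact this

end TJ

/-- A connected graph with only finitely many 2-edge-connected components contains a
`T`-join for every infinite `T`. -/
theorem hasTJoin_of_finitely_many_2ecc {V : Type*} (G : SimpleGraph V) (hG : G.Connected)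
    (hfin : {S : Set V | G.IsTwoEdgeConnectedComponent S}.Finite)
    (T : Set V) (hT : T.Infinite) :
    G.HasTJoin T := by
  obtain ⟨t, W, h1, h2, h3⟩ := TJ.key G hG (TJ.br_finite G hfin) T hT
  exact TJ.main_thm G hG T t W h1 h2 h3
end

section
/- Let G be a graph such that every connected component of G has only finitely many 2-edge-connected components. Then for every edge f of G, every connected component of G − f also has only finitely many 2-edge-connected components. -/
namespace SimpleGraph

/-- Two vertices that no single edge deletion separates. -/
def TwoRel {V : Type*} (G : SimpleGraph V) (u v : V) : Prop :=
  ∀ e : Sym2 V, (G.deleteEdges {e}).Reachable u v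

theorem TwoRel.symm' {V : Type*} {G : SimpleGraph V} {u v : V} (h : G.TwoRel u v) :
    G.TwoRel v u := fun e => (h e).symm

theorem TwoRel.trans' {V : Type*} {G : SimpleGraph V} {u v w : V} (h : G.TwoRel u v)
    (h' : G.TwoRel v w) : G.TwoRel u w := fun e => (h e).trans (h' e)

theorem TwoRel.reachable {V : Type*} {G : SimpleGraph V} {u v : V} (h : G.TwoRel u v) :
    G.Reachable u v := (h s(u, u)).mono (G.deleteEdges_le _)

theorem reachable_delete_of_walk {V : Type*} {G : SimpleGraph V} {u v : V} (p : G.Walk u v)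
    (e : Sym2 V) (he : e ∉ p.edges) : (G.deleteEdges {e}).Reachable u v :=
  ⟨p.toDeleteEdge e he⟩

theorem twoRel_of_mem_path {V : Type*} {G : SimpleGraph V} {a b w : V} (p : G.Walk a b)
    (hp : p.IsPath) (h : G.TwoRel a b) (hw : w ∈ p.support) : G.TwoRel a w := by
  classical
  intro e
  by_cases he : e ∈ (p.takeUntil w hw).edges
  · have hnd : p.edges.Nodup := hp.isTrail.edges_nodup
    rw [← p.take_spec hw, Walk.edges_append] at hnd
    have he' : e ∉ (p.dropUntil w hw).edges := fun h2 => List.disjoint_of_nodup_append hnd he h2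
    exact (h e).trans (reachable_delete_of_walk _ e he').symm
  · exact reachable_delete_of_walk _ e he

theorem twoRel_class_twoEdgeConnected {V : Type*} (G : SimpleGraph V) (u : V) :
    (G.induce {v | G.TwoRel u v}).TwoEdgeConnected := by
  classical
  set T : Set V := {v | G.TwoRel u v} with hT
  have huT : u ∈ T := fun e => Reachable.refl _
  have key : ∀ e : Sym2 T, ((G.induce T).deleteEdges {e}).Connected := by
    intro e
    have : Nonempty T := ⟨⟨u, huT⟩⟩
    refine ⟨?_⟩
    rintro ⟨a, ha⟩ ⟨b, hb⟩
    have hab : G.TwoRel a b := (TwoRel.symm' ha).trans' hb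
    obtain ⟨p, hp⟩ := (hab (e.map Subtype.val)).exists_isPath
    have hsup : ∀ w ∈ p.support, w ∈ T := by
      intro w hw
      have h2 : G.TwoRel a w := by
        refine twoRel_of_mem_path (p.mapLe (G.deleteEdges_le _))
          ((Walk.isPath_mapLe _).2 hp) hab ?_
        simpa using hw
      exact TwoRel.trans' ha h2
    have hr : ((G.deleteEdges {e.map Subtype.val}).induce T).Reachable ⟨a, ha⟩ ⟨b, hb⟩ :=
      ⟨p.induce T hsup⟩
    refine hr.mono ?_
    intro c d hcd
    simp only [comap_adj, deleteEdges_adj, Set.mem_singleton_iff] at hcd ⊢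
    refine ⟨hcd.1, fun hh => hcd.2 ?_⟩
    rw [← hh]; rfl
  exact ⟨(key s(⟨u, huT⟩, ⟨u, huT⟩)).mono (deleteEdges_le _), fun e _ => key e⟩

theorem subset_twoRel_class {V : Type*} {G : SimpleGraph V} {S : Set V}
    (hS : (G.induce S).TwoEdgeConnected) {u : V} (hu : u ∈ S) : S ⊆ {v | G.TwoRel u v} := by
  intro v hv e
  by_cases he : ∃ e' ∈ (G.induce S).edgeSet, e'.map Subtype.val = e
  · obtain ⟨e', he', rfl⟩ := he
    have hr := (hS.2 e' he').preconnected ⟨u, hu⟩ ⟨v, hv⟩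
    refine hr.map (G' := G.deleteEdges {e'.map Subtype.val}) ⟨Subtype.val, ?_⟩
    intro c d hcd
    simp only [comap_adj, deleteEdges_adj, Set.mem_singleton_iff] at hcd ⊢
    refine ⟨hcd.1, fun hh => hcd.2 ?_⟩
    exact Sym2.map.injective Subtype.val_injective hh
  · have hr := hS.1.preconnected ⟨u, hu⟩ ⟨v, hv⟩
    refine hr.map (G' := G.deleteEdges {e}) ⟨Subtype.val, ?_⟩
    intro c d hcd
    simp only [deleteEdges_adj, Set.mem_singleton_iff]
    exact ⟨hcd, fun hh => he ⟨s(c, d), hcd, hh⟩⟩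

theorem isComp_class {V : Type*} (G : SimpleGraph V) (u : V) :
    G.IsTwoEdgeConnectedComponent {v | G.TwoRel u v} :=
  ⟨twoRel_class_twoEdgeConnected G u, fun _ hsub hS' =>
    (subset_twoRel_class hS' (hsub fun _ => Reachable.refl _)).antisymm hsub⟩

theorem IsTwoEdgeConnectedComponent.eq_class {V : Type*} {G : SimpleGraph V} {S : Set V}
    (h : G.IsTwoEdgeConnectedComponent S) {u : V} (hu : u ∈ S) : S = {v | G.TwoRel u v} :=
  (h.2 _ (subset_twoRel_class h.1 hu) (twoRel_class_twoEdgeConnected G u)).symm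

theorem reachable_split {V : Type*} {H : SimpleGraph V} (x y : V) {u v : V}
    (p : H.Walk u v) : (H.deleteEdges {s(x, y)}).Reachable u v ∨
      ((H.deleteEdges {s(x, y)}).Reachable u x ∧ (H.deleteEdges {s(x, y)}).Reachable v y) ∨
      ((H.deleteEdges {s(x, y)}).Reachable u y ∧ (H.deleteEdges {s(x, y)}).Reachable v x) := by
  induction p with
  | nil => exact Or.inl (Reachable.refl _)
  | @cons a b c hab p ih =>
    by_cases he : s(a, b) = s(x, y)
    · rcases Sym2.eq_iff.1 he with ⟨rfl, rfl⟩ | ⟨rfl, rfl⟩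
      · rcases ih with h | ⟨_, h⟩ | ⟨_, h⟩
        · exact Or.inr (Or.inl ⟨Reachable.refl _, h.symm⟩)
        · exact Or.inr (Or.inl ⟨Reachable.refl _, h⟩)
        · exact Or.inl h.symm
      · rcases ih with h | ⟨_, h⟩ | ⟨_, h⟩
        · exact Or.inr (Or.inr ⟨Reachable.refl _, h.symm⟩)
        · exact Or.inl h.symm
        · exact Or.inr (Or.inr ⟨Reachable.refl _, h⟩)
    · have h1 : (H.deleteEdges {s(x, y)}).Reachable a b := by
        apply Adj.reachable
        simp only [deleteEdges_adj, Set.mem_singleton_iff]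
        exact ⟨hab, he⟩
      rcases ih with h | ⟨h, h'⟩ | ⟨h, h'⟩
      · exact Or.inl (h1.trans h)
      · exact Or.inr (Or.inl ⟨h1.trans h, h'⟩)
      · exact Or.inr (Or.inr ⟨h1.trans h, h'⟩)

theorem exists_finite_cut {V : Type*} (H : SimpleGraph V) (x y : V) :
    ∃ P : Set (Sym2 V), P.Finite ∧ ∀ e ∉ P, H.Reachable x y →
      (H.deleteEdges {e}).Reachable x y := by
  by_cases h : H.Reachable x y
  · obtain ⟨p⟩ := h
    exact ⟨{e | e ∈ p.edges}, p.edges.finite_toSet, fun e he _ => reachable_delete_of_walk p e he⟩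
  · exact ⟨∅, Set.finite_empty, fun e _ h' => absurd h' h⟩

theorem twoRel_delete {V : Type*} {G : SimpleGraph V} {x y : V} {P : Set (Sym2 V)}
    (hP : ∀ e ∉ P, (G.deleteEdges {s(x, y)}).Reachable x y →
      ((G.deleteEdges {s(x, y)}).deleteEdges {e}).Reachable x y) {u v : V}
    (huv : (G.deleteEdges {s(x, y)}).Reachable u v) (hG : G.TwoRel u v)
    (hx : ∀ e ∈ P, (((G.deleteEdges {s(x, y)}).deleteEdges {e}).Reachable u x ↔
      ((G.deleteEdges {s(x, y)}).deleteEdges {e}).Reachable v x)) :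
    (G.deleteEdges {s(x, y)}).TwoRel u v := by
  intro e
  obtain ⟨p⟩ := hG e
  have hs := reachable_split x y p
  have hcomm : (G.deleteEdges {e}).deleteEdges {s(x, y)}
      = (G.deleteEdges {s(x, y)}).deleteEdges {e} := by
    rw [deleteEdges_deleteEdges, deleteEdges_deleteEdges, Set.union_comm]
  rw [hcomm] at hs
  have hle := (G.deleteEdges {s(x, y)}).deleteEdges_le {e}
  rcases hs with h | ⟨h1, h2⟩ | ⟨h1, h2⟩
  · exact h
  · by_cases he : e ∈ P
    · exact h1.trans ((hx e he).1 h1).symm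
    · exact h1.trans ((hP e he
        ((h1.mono hle).symm.trans (huv.trans (h2.mono hle)))).trans h2.symm)
  · by_cases he : e ∈ P
    · exact ((hx e he).2 h2).trans h2.symm
    · exact h1.trans ((hP e he
        ((h2.mono hle).symm.trans (huv.symm.trans (h1.mono hle)))).symm.trans h2.symm)

end SimpleGraph

/-- If every connected component of `G` has only finitely many 2-edge-connected components,
then for every edge `f` of `G`, every connected component of `G − f` has only finitely many
2-edge-connected components. -/
theorem finitely_many_2ecc_deleteEdge {V : Type*} (G : SimpleGraph V)
    (h : ∀ C : G.ConnectedComponent,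
      {S : Set V | G.IsTwoEdgeConnectedComponent S ∧ S ⊆ C.supp}.Finite)
    (f : Sym2 V) (hf : f ∈ G.edgeSet) :
    ∀ C : (G.deleteEdges {f}).ConnectedComponent,
      {S : Set V | (G.deleteEdges {f}).IsTwoEdgeConnectedComponent S ∧ S ⊆ C.supp}.Finite := by
  classical
  intro C
  induction f using Sym2.ind with
  | _ x y =>
  induction C using SimpleGraph.ConnectedComponent.ind with
  | _ c =>
  obtain ⟨P, hPfin, hP⟩ := SimpleGraph.exists_finite_cut (G.deleteEdges {s(x, y)}) x y
  have hex : ∀ S : Set V, ∃ u : V, S.Nonempty → u ∈ S := by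
    intro S
    by_cases hS : S.Nonempty
    · exact ⟨hS.some, fun _ => hS.some_mem⟩
    · exact ⟨c, fun h' => absurd h' hS⟩
  choose r hr using hex
  have hne : ∀ S, (G.deleteEdges {s(x, y)}).IsTwoEdgeConnectedComponent S → r S ∈ S := by
    intro S hS
    obtain ⟨a⟩ := hS.1.1.nonempty
    exact hr S ⟨a.1, a.2⟩
  have hreach : ∀ S, (G.deleteEdges {s(x, y)}).IsTwoEdgeConnectedComponent S →
      S ⊆ ((G.deleteEdges {s(x, y)}).connectedComponentMk c).supp →
      (G.deleteEdges {s(x, y)}).Reachable (r S) c := by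
    intro S hS hsub
    exact SimpleGraph.ConnectedComponent.exact (hsub (hne S hS))
  let F : Set V → Set V × Set (Sym2 V) := fun S =>
    ({v | G.TwoRel (r S) v},
      {e | e ∈ P ∧ ((G.deleteEdges {s(x, y)}).deleteEdges {e}).Reachable (r S) x})
  refine Set.Finite.of_injOn (f := F)
    (t := {S : Set V | G.IsTwoEdgeConnectedComponent S ∧ S ⊆ (G.connectedComponentMk c).supp}
      ×ˢ {Q | Q ⊆ P}) ?_ ?_ ((h (G.connectedComponentMk c)).prod hPfin.finite_subsets)
  · rintro S ⟨hS, hsub⟩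
    refine ⟨⟨SimpleGraph.isComp_class G _, ?_⟩, fun e he => he.1⟩
    intro v hv
    have hv' : G.TwoRel (r S) v := hv
    exact SimpleGraph.ConnectedComponent.sound
      (hv'.reachable.symm.trans ((hreach S hS hsub).mono (G.deleteEdges_le _)))
  · rintro S ⟨hS, hsub⟩ S' ⟨hS', hsub'⟩ hF
    have h1 : {v | G.TwoRel (r S) v} = {v | G.TwoRel (r S') v} := congrArg Prod.fst hF
    have h2 := congrArg Prod.snd hF
    have hG : G.TwoRel (r S) (r S') := by
      have : r S' ∈ {v | G.TwoRel (r S') v} := fun _ => SimpleGraph.Reachable.refl _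
      rw [← h1] at this
      exact this
    have hrel := SimpleGraph.twoRel_delete hP
      ((hreach S hS hsub).trans (hreach S' hS' hsub').symm) hG (by
        intro e he
        have h3 := Set.ext_iff.1 h2 e
        simp only [F, Set.mem_ofPred_eq, he, true_and] at h3
        exact h3)
    have hmem : r S' ∈ S := by
      rw [hS.eq_class (hne S hS)]
      exact hrel
    rw [hS.eq_class hmem]
    exact (hS'.eq_class (hne S' hS')).symm
end

section
/- Let H be a graph with a distinguished vertex z such that every connected component of H − z is 2-edge-connected, and every connected component of H − z is joined to z in H by either zero or infinitely many edges. Then there is a partition of the edge set E(H) into countable sets E_i (i ∈ I) such that for every i ∈ I, the spanning subgraph H_i = (V(H), E_i) has the same property: every connected component of H_i − z is 2-edge-connected, and every connected component of H_i − z is joined to z in H_i by either zero or infinitely many edges. -/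
namespace SimpleGraph

variable {V : Type*}

/-- The vertex set (inside `V`) of a connected component `C` of `G − U`. -/
def compSet (G : SimpleGraph V) (U : Set V)
    (C : (G.induce (Uᶜ : Set V)).ConnectedComponent) : Set V :=
  Subtype.val '' C.supp

/-- The connected component `C` of `G − U` is joined to `U` by exactly one edge of `G`. -/
def JoinedByExactlyOneEdge (G : SimpleGraph V) (U : Set V)
    (C : (G.induce (Uᶜ : Set V)).ConnectedComponent) : Prop :=
  ∃! e : Sym2 V, e ∈ G.edgeSet ∧ ∃ x ∈ G.compSet U C, ∃ y ∈ U, e = s(x, y)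

end SimpleGraph

namespace SimpleGraph

variable {V : Type*}

/-- Every connected component of `H − z` is 2-edge-connected, and each such component is
joined to `z` in `H` by either zero or infinitely many edges. -/
def GoodAtZ (H : SimpleGraph V) (z : V) : Prop :=
  ∀ C : (H.induce (({z} : Set V)ᶜ : Set V)).ConnectedComponent,
    (H.induce (H.compSet {z} C)).TwoEdgeConnected ∧
    ({e : Sym2 V | e ∈ H.edgeSet ∧ ∃ x ∈ H.compSet {z} C, e = s(x, z)} = ∅ ∨
     {e : Sym2 V | e ∈ H.edgeSet ∧ ∃ x ∈ H.compSet {z} C, e = s(x, z)}.Infinite)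

end SimpleGraph

open Cardinal Set in
theorem cl_exists {E : Type u} (D : E → E → Set E) (X : Set E) :
    ∃ S : Set E, X ⊆ S ∧ (∀ a ∈ S, ∀ b ∈ S, D a b ⊆ S) ∧
      (∀ F : Set E, X ⊆ F → (∀ a ∈ F, ∀ b ∈ F, D a b ⊆ F) → S ⊆ F) ∧
      (∀ μ : Cardinal.{u}, ℵ₀ ≤ μ → #X ≤ μ → (∀ a b, #(D a b) ≤ μ) → #S ≤ μ) := by
  let st : Set E → Set E := fun S => S ∪ ⋃ p : S × S, D p.1 p.2
  let f : ℕ → Set E := fun n => st^[n] X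
  have hf : ∀ n, f (n+1) = st (f n) := fun n => Function.iterate_succ_apply' _ _ _
  have hmono : Monotone f := monotone_nat_of_le_succ fun n => by
    rw [hf]; exact subset_union_left
  refine ⟨⋃ n, f n, subset_iUnion f 0, ?_, ?_, ?_⟩
  · intro a ha b hb
    obtain ⟨n, hn⟩ := mem_iUnion.1 ha
    obtain ⟨m, hm⟩ := mem_iUnion.1 hb
    have h1 : a ∈ f (max n m) := hmono (le_max_left _ _) hn
    have h2 : b ∈ f (max n m) := hmono (le_max_right _ _) hm
    intro c hc
    refine mem_iUnion.2 ⟨max n m + 1, ?_⟩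
    rw [hf]
    exact Or.inr (mem_iUnion.2 ⟨(⟨a, h1⟩, ⟨b, h2⟩), hc⟩)
  · intro F hX hF
    refine iUnion_subset fun n => ?_
    induction n with
    | zero => exact hX
    | succ n ih =>
      rw [hf]
      refine union_subset ih (iUnion_subset fun p => hF _ (ih p.1.2) _ (ih p.2.2))
  · intro μ hμ hX hD
    have key : ∀ n, #(f n) ≤ μ := by
      intro n
      induction n with
      | zero => exact hX
      | succ n ih =>
        rw [hf]
        refine (mk_union_le _ _).trans (add_le_of_le hμ ih ?_)
        refine (mk_iUnion_le _).trans (mul_le_of_le hμ ?_ (ciSup_le' fun p => hD _ _))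
        rw [mk_prod, lift_id]
        exact mul_le_of_le hμ ih ih
    have := mk_iUnion_le_lift f
    simp only [mk_nat, lift_aleph0, lift_uzero] at this
    exact this.trans (mul_le_of_le hμ hμ (ciSup_le' key))

open Cardinal Set in
theorem g_exists {E T : Type u} [LinearOrder T] [WellFoundedLT T] (K : Set E) (h : #K ≤ #T) :
    ∃ g : K → T, Function.Injective g ∧ ∀ e, #(Iio (g e)) < #K := by
  by_cases hx : ∃ t : T, #K ≤ #(Iio t)
  · obtain ⟨t, ht, hmin⟩ := WellFounded.has_min (wellFounded_lt (α := T)) {t | #K ≤ #(Iio t)} hx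
    obtain ⟨j⟩ := ht
    refine ⟨fun e => (j e).1, fun a b hab => j.injective (Subtype.ext hab), fun e => ?_⟩
    by_contra hc
    exact hmin _ (not_lt.1 hc) (j e).2
  · push Not at hx
    obtain ⟨j⟩ := h
    exact ⟨j, j.injective, fun e => hx _⟩

open Cardinal Set in
theorem abstract_step {E ι : Type u} (Good : Set E → Prop)
    (hU : ∀ SS : Set (Set E), (∀ S ∈ SS, Good S) → Good (⋃₀ SS))
    (hC : ∀ F, Good F → ∀ e ∈ F, ∃ F' ⊆ F, e ∈ F' ∧ F'.Countable ∧ Good F')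
    (Conn : ι → Set E → Prop) (hmono : ∀ i A B, A ⊆ B → Conn i A → Conn i B)
    (Q : E → E → Set ι) (hQ : ∀ a b, (Q a b).Countable)
    (hcut : ∀ F N, Good F → N ⊆ F →
      (∀ a ∈ N, ∀ b ∈ N, ∀ i ∈ Q a b, Conn i (F \ N) → ∀ L : Set E, L.Finite →
        Conn i ((F \ N) \ L)) → Good (F \ N))
    (F : Set E) (hF : Good F) (hunc : ℵ₀ < #F) :
    ∃ PP : Set (Set E), PP.PairwiseDisjoint id ∧ ⋃₀ PP = F ∧
      ∀ P ∈ PP, #P < #F ∧ Good P := by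
  classical
  let T : Type u := (#F).ord.ToType
  have hT : #T = #F := by simp [T]
  have hIio : ∀ t : T, #(Iio t) < #F := fun t => mk_Iio_toType_ord_lt t
  obtain ⟨idx⟩ : Nonempty (F ≃ T) := Cardinal.eq.1 hT.symm
  -- cuts
  have hK : ∀ i : ι, ∃ K : Set E, K ⊆ F ∧ ∀ L : Set E, L ⊆ F → ¬ Conn i (F \ L) →
      ¬ Conn i (F \ K) ∧ #K ≤ #L := by
    intro i
    by_cases hx : ∃ L : Set E, L ⊆ F ∧ ¬ Conn i (F \ L)
    · let s : Set (Set E) := {L | L ⊆ F ∧ ¬ Conn i (F \ L)}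
      obtain ⟨K, hK, hmin⟩ := WellFounded.has_min
        (InvImage.wf (fun L : Set E => #L) Cardinal.lt_wf) s hx
      exact ⟨K, hK.1, fun L hL hL' => ⟨hK.2, not_lt.1 (hmin L ⟨hL, hL'⟩)⟩⟩
    · exact ⟨∅, empty_subset _, fun L hL hL' => (hx ⟨L, hL, hL'⟩).elim⟩
  choose K hKF hKmin using hK
  have hg : ∀ i, ∃ g : K i → T, Function.Injective g ∧ ∀ e, #(Iio (g e)) < #(K i) :=
    fun i => g_exists (K i) (hT ▸ mk_le_mk_of_subset (hKF i))
  choose g ginj hg using hg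
  have hW : ∀ (A : Set E) (e : E), ∃ W : Set E, W ⊆ A ∧ W.Countable ∧
      (Good A → e ∈ A → e ∈ W ∧ Good W) := by
    intro A e
    by_cases h : Good A ∧ e ∈ A
    · obtain ⟨W, h1, h2, h3, h4⟩ := hC A h.1 e h.2
      exact ⟨W, h1, h3, fun _ _ => ⟨h2, h4⟩⟩
    · exact ⟨∅, empty_subset _, countable_empty, fun h1 h2 => (h ⟨h1, h2⟩).elim⟩
  choose W hWA hWc hWg using hW
  -- small part of the cut
  let R : T → ι → Set E := fun α i =>
    {e | ∃ h : e ∈ K i, g i ⟨e, h⟩ ≤ α ∨ #(Iio (g i ⟨e, h⟩)) < ℵ₀}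
  let μ : T → Cardinal.{u} := fun α => max ℵ₀ #(Iio α)
  have hμ : ∀ α, ℵ₀ ≤ μ α := fun α => le_max_left _ _
  have hμmono : ∀ {α β}, α ≤ β → μ α ≤ μ β := fun h =>
    max_le_max le_rfl (mk_le_mk_of_subset (Iio_subset_Iio h))
  have hIic : ∀ α : T, #(Iic α) ≤ μ α := by
    intro α
    rw [← Iio_insert]
    exact (mk_insert_le).trans (add_le_of_le (hμ α) (le_max_right _ _)
      ((one_lt_aleph0.le).trans (hμ α)))
  have hfin : #{t : T | #(Iio t) < ℵ₀} ≤ ℵ₀ := by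
    have hf : ∀ t : {t : T | #(Iio t) < ℵ₀}, (Iio t.1).Finite := fun t =>
      lt_aleph0_iff_set_finite.1 t.2
    have hinj : Function.Injective fun t : {t : T | #(Iio t) < ℵ₀} => (Iio t.1).ncard := by
      have hs : StrictMono fun t : {t : T | #(Iio t) < ℵ₀} => (Iio t.1).ncard := by
        intro s t hst
        exact ncard_lt_ncard (Iio_ssubset_Iio hst) (hf t)
      exact hs.injective
    exact mk_le_aleph0_iff.2 hinj.countable
  have hR : ∀ α i, #(R α i) ≤ μ α := by
    intro α i
    let S : Set T := Iic α ∪ {t : T | #(Iio t) < ℵ₀}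
    have hS : #S ≤ μ α := (mk_union_le _ _).trans
      (add_le_of_le (hμ α) (hIic α) (hfin.trans (hμ α)))
    refine le_trans ?_ hS
    refine mk_le_of_injective (f := fun e : R α i => (⟨g i ⟨e.1, e.2.1⟩, e.2.2⟩ : S)) ?_
    intro a b hab
    have := ginj i (congrArg Subtype.val hab)
    exact Subtype.ext (Subtype.mk.inj this)
  have hRK : ∀ α i, R α i ⊆ K i := fun α i e h => h.1
  let D : T → Set E → E → E → Set E := fun α N a b =>
    W (F \ N) a ∪ ⋃ i : Q a b, R α i
  have hD : ∀ α N a b, #(D α N a b) ≤ μ α := by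
    intro α N a b
    refine (mk_union_le _ _).trans (add_le_of_le (hμ α)
      ((hWc (F \ N) a).le_aleph0.trans (hμ α)) ?_)
    refine (mk_iUnion_le _).trans (mul_le_of_le (hμ α) ((hQ a b).le_aleph0.trans (hμ α)) 
      (ciSup_le' fun i => hR _ _))
  let X : T → Set E → Set E := fun α N => N ∪ {e | ∃ h : e ∈ F, idx ⟨e, h⟩ ≤ α}
  choose cl hclX hclD hclF hclμ using fun α N => cl_exists (D α N) (X α N)
  obtain ⟨M, hM⟩ : ∃ M : T → Set E, ∀ α, M α = cl α (⋃ β : Iio α, M β) := by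
    let M : T → Set E := (wellFounded_lt (α := T)).fix
      (fun α f => cl α (⋃ β : Iio α, f β.1 β.2))
    exact ⟨M, fun α => WellFounded.fix_eq _ _ _⟩
  let N : T → Set E := fun α => ⋃ β : Iio α, M β
  have hM' : ∀ α, M α = cl α (N α) := hM
  have hNM : ∀ α, N α ⊆ M α := fun α => by
    rw [hM']; exact subset_union_left.trans (hclX α (N α))
  have hlt : ∀ {β α}, β < α → M β ⊆ N α := fun {β α} h =>
    subset_iUnion (fun β : Iio α => M β) ⟨β, h⟩
  have hMmono : ∀ {β α}, β ≤ α → M β ⊆ M α := fun {β α} h => by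
    rcases h.eq_or_lt with rfl | h
    · exact subset_rfl
    · exact (hlt h).trans (hNM α)
  have hidx : ∀ e (h : e ∈ F), e ∈ M (idx ⟨e, h⟩) := fun e h => by
    rw [hM']; exact hclX _ _ (Or.inr ⟨h, le_rfl⟩)
  have hMF : ∀ α, M α ⊆ F := by
    intro α
    induction α using WellFoundedLT.induction with
    | ind α ih =>
      rw [hM']
      refine hclF _ _ _ (union_subset (iUnion_subset fun β => ih _ β.2) (fun e h => h.1)) ?_
      intro a _ b _
      exact union_subset ((hWA _ _).trans sdiff_subset)
        (iUnion_subset fun i => (hRK _ _).trans (hKF _))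
  have hNF : ∀ α, N α ⊆ F := fun α => (hNM α).trans (hMF α)
  have hNc' : ∀ α, (∀ β < α, #(M β) ≤ μ β) → #(N α) ≤ μ α := by
    intro α h
    refine (mk_iUnion_le _).trans (mul_le_of_le (hμ α) (le_max_right _ _) 
      (ciSup_le' fun β => (h _ β.2).trans (hμmono (le_of_lt β.2))))
  have hMc : ∀ α, #(M α) ≤ μ α := by
    intro α
    induction α using WellFoundedLT.induction with
    | ind α ih =>
      rw [hM']
      refine hclμ _ _ _ (hμ α) ?_ (hD _ _)
      refine (mk_union_le _ _).trans (add_le_of_le (hμ α) (hNc' α ih) ?_)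
      refine le_trans ?_ (hIic α)
      refine mk_le_of_injective (f := fun e : {e | ∃ h : e ∈ F, idx ⟨e, h⟩ ≤ α} =>
        (⟨idx ⟨e.1, e.2.1⟩, e.2.2⟩ : Iic α)) ?_
      intro a b hab
      have := idx.injective (congrArg Subtype.val hab)
      exact Subtype.ext (Subtype.mk.inj this)
  have hNc : ∀ α, #(N α) ≤ μ α := fun α => hNc' α fun β _ => hMc β
  -- the sets `N α` are closed under small cuts
  have hNcut : ∀ α, ∀ a ∈ N α, ∀ b ∈ N α, ∀ i ∈ Q a b, #(K i) ≤ μ α → K i ⊆ N α := by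
    intro α a ha b hb i hi hKi e he
    obtain ⟨⟨β, hβ⟩, haβ⟩ := mem_iUnion.1 ha
    obtain ⟨⟨γ, hγ⟩, hbγ⟩ := mem_iUnion.1 hb
    have main : ∀ δ < α, β ≤ δ → γ ≤ δ →
        (g i ⟨e, he⟩ ≤ δ ∨ #(Iio (g i ⟨e, he⟩)) < ℵ₀) → e ∈ N α := by
      intro δ hδ h1 h2 h3
      apply hlt hδ
      have ha' := hMmono h1 haβ
      have hb' := hMmono h2 hbγ
      rw [hM'] at ha' hb' ⊢
      exact hclD δ (N δ) a ha' b hb' (Or.inr (mem_iUnion.2 ⟨⟨i, hi⟩, he, h3⟩))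
    rcases lt_max_iff.1 ((hg i ⟨e, he⟩).trans_le hKi) with h | h
    · exact main (max β γ) (max_lt hβ hγ) (le_max_left _ _) (le_max_right _ _) (Or.inr h)
    · have hlt' : g i ⟨e, he⟩ < α := by
        by_contra hc
        exact (mk_le_mk_of_subset (Iio_subset_Iio (not_lt.1 hc))).not_gt h
      exact main (max (max β γ) (g i ⟨e, he⟩)) (max_lt (max_lt hβ hγ) hlt')
        ((le_max_left _ _).trans (le_max_left _ _)) ((le_max_right _ _).trans (le_max_left _ _))
        (Or.inl (le_max_right _ _))
  have hgood : ∀ α, Good (F \ N α) := by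
    intro α
    refine hcut F (N α) hF (hNF α) ?_
    intro a ha b hb i hi hconn L hL
    by_contra hc
    have h1 : (F \ N α) \ L = F \ (N α ∪ (L ∩ F)) := by
      ext e; simp only [mem_sdiff, mem_union, mem_inter_iff]; tauto
    rw [h1] at hc
    obtain ⟨h2, h3⟩ := hKmin i _ (union_subset (hNF α) inter_subset_right) hc
    have h4 : #(K i) ≤ μ α := h3.trans ((mk_union_le _ _).trans (add_le_of_le (hμ α) (hNc α)
      (((hL.subset inter_subset_left).countable.le_aleph0).trans (hμ α))))
    exact h2 (hmono i _ _ (sdiff_subset_sdiff_right (hNcut α a ha b hb i hi h4)) hconn)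
  refine ⟨range fun α => M α \ N α, ?_, ?_, ?_⟩
  · have : ∀ α β, α < β → Disjoint (M α \ N α) (M β \ N β) := by
      intro α β h
      rw [Set.disjoint_left]
      intro e h1 h2
      exact h2.2 (hlt h h1.1)
    rintro _ ⟨α, rfl⟩ _ ⟨β, rfl⟩ hne
    rcases lt_trichotomy α β with h | h | h
    · exact this _ _ h
    · subst h; exact (hne rfl).elim
    · exact (this _ _ h).symm
  · apply subset_antisymm
    · rintro e ⟨_, ⟨α, rfl⟩, h⟩
      exact hMF α h.1
    · intro e he
      obtain ⟨α, hα, hmin⟩ := WellFounded.has_min (wellFounded_lt (α := T)) {α | e ∈ M α}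
        ⟨_, hidx e he⟩
      refine ⟨_, ⟨α, rfl⟩, hα, fun h => ?_⟩
      obtain ⟨⟨β, hβ⟩, heβ⟩ := mem_iUnion.1 h
      exact hmin β heβ hβ
  · rintro _ ⟨α, rfl⟩
    refine ⟨?_, ?_⟩
    · exact ((mk_le_mk_of_subset sdiff_subset).trans (hMc α)).trans_lt (max_lt hunc (hIio α))
    · have : M α \ N α = ⋃₀ ((fun e => W (F \ N α) e) '' (M α \ N α)) := by
        apply subset_antisymm
        · intro e he
          exact ⟨_, ⟨e, he, rfl⟩, (hWg _ e (hgood α) ⟨hMF α he.1, he.2⟩).1⟩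
        · rintro x ⟨_, ⟨e, he, rfl⟩, hx⟩
          refine ⟨?_, (hWA _ _ hx).2⟩
          have h1 := he.1
          rw [hM'] at h1 ⊢
          exact hclD _ _ e h1 e h1 (Or.inl hx)
      change Good (M α \ N α)
      rw [this]
      apply hU
      rintro _ ⟨e, he, rfl⟩
      exact (hWg _ e (hgood α) ⟨hMF α he.1, he.2⟩).2

open Cardinal Set in
theorem abstract_main {E ι : Type u} (Good : Set E → Prop)
    (hU : ∀ SS : Set (Set E), (∀ S ∈ SS, Good S) → Good (⋃₀ SS))
    (hC : ∀ F, Good F → ∀ e ∈ F, ∃ F' ⊆ F, e ∈ F' ∧ F'.Countable ∧ Good F')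
    (Conn : ι → Set E → Prop) (hmono : ∀ i A B, A ⊆ B → Conn i A → Conn i B)
    (Q : E → E → Set ι) (hQ : ∀ a b, (Q a b).Countable)
    (hcut : ∀ F N, Good F → N ⊆ F →
      (∀ a ∈ N, ∀ b ∈ N, ∀ i ∈ Q a b, Conn i (F \ N) → ∀ L : Set E, L.Finite →
        Conn i ((F \ N) \ L)) → Good (F \ N))
    (F : Set E) (hF : Good F) :
    ∃ PP : Set (Set E), PP.PairwiseDisjoint id ∧ ⋃₀ PP = F ∧
      ∀ P ∈ PP, P.Countable ∧ Good P := by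
  induction h : #F using WellFoundedLT.induction generalizing F with
  | ind κ ih =>
    subst h
    by_cases hc : #F ≤ ℵ₀
    · exact ⟨{F}, pairwiseDisjoint_singleton _ _, sUnion_singleton _, by
        rintro _ rfl; exact ⟨le_aleph0_iff_set_countable.1 hc, hF⟩⟩
    · obtain ⟨PP, h1, h2, h3⟩ := abstract_step Good hU hC Conn hmono Q hQ hcut F hF (not_le.1 hc)
      have : ∀ P : PP, ∃ QQ : Set (Set E), QQ.PairwiseDisjoint id ∧ ⋃₀ QQ = P.1 ∧
        ∀ P ∈ QQ, P.Countable ∧ Good P := fun P =>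
          ih _ (h3 P P.2).1 P.1 (h3 P P.2).2 rfl
      choose QQ q1 q2 q3 using this
      refine ⟨⋃ P, QQ P, ?_, ?_, ?_⟩
      · intro A hA B hB hne
        obtain ⟨P, hP⟩ := mem_iUnion.1 hA
        obtain ⟨P', hP'⟩ := mem_iUnion.1 hB
        by_cases hPP : P = P'
        · subst hPP; exact q1 P hP hP' hne
        · have := h1 P.2 P'.2 (fun h => hPP (Subtype.ext h))
          refine Disjoint.mono ?_ ?_ this
          · show A ≤ P.1
            rw [← q2 P]; exact subset_sUnion_of_mem hP
          · show B ≤ P'.1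
            rw [← q2 P']; exact subset_sUnion_of_mem hP'
      · rw [sUnion_iUnion]
        simp only [q2]
        rw [← sUnion_eq_iUnion, h2]
      · intro A hA
        obtain ⟨P, hP⟩ := mem_iUnion.1 hA
        exact q3 P A hP
section
open Set

theorem rtg_lift {α β : Type*} {r : α → α → Prop} {p : β → β → Prop} (f : α → β)
    (h : ∀ a b, r a b → p (f a) (f b)) {a b : α} (hr : Relation.ReflTransGen r a b) :
    Relation.ReflTransGen p (f a) (f b) := by
  induction hr with
  | refl => exact Relation.ReflTransGen.refl
  | tail _ hs ih => exact Relation.ReflTransGen.tail ih (h _ _ hs)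

/-- One step in `F` avoiding `z`. -/
def RZ {V : Type u} (z : V) (F : Set (Sym2 V)) (a b : V) : Prop :=
  s(a, b) ∈ F ∧ a ≠ z ∧ b ≠ z

def RR {V : Type u} (z : V) (F : Set (Sym2 V)) : V → V → Prop :=
  Relation.ReflTransGen (RZ z F)

structure GoodE {V : Type u} (z : V) (F : Set (Sym2 V)) : Prop where
  bridge : ∀ x y, x ≠ z → y ≠ z → s(x, y) ∈ F → RR z (F \ {s(x, y)}) x y
  inf : ∀ x, x ≠ z → s(x, z) ∈ F → {w | w ≠ z ∧ s(w, z) ∈ F ∧ RR z F x w}.Infinite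

theorem RR.mono {V : Type u} {z : V} {A B : Set (Sym2 V)} (h : A ⊆ B) {x y : V}
    (hr : RR z A x y) : RR z B x y :=
  rtg_lift id (fun _ _ h' => ⟨h h'.1, h'.2⟩) hr

theorem RR.symm {V : Type u} {z : V} {A : Set (Sym2 V)} {x y : V}
    (hr : RR z A x y) : RR z A y x := by
  have hs : ∀ a b, RZ z A a b → RZ z A b a := by
    rintro a b ⟨h1, h2, h3⟩
    exact ⟨Sym2.eq_swap ▸ h1, h3, h2⟩
  induction hr with
  | refl => exact Relation.ReflTransGen.refl
  | tail _ h ih => exact Relation.ReflTransGen.head (hs _ _ h) ih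

theorem RR.trans {V : Type u} {z : V} {A : Set (Sym2 V)} {x y w : V}
    (hr : RR z A x y) (h2 : RR z A y w) : RR z A x w := Relation.ReflTransGen.trans hr h2

theorem RR.fin {V : Type u} {z : V} {A : Set (Sym2 V)} {x y : V}
    (hr : RR z A x y) : ∃ L ⊆ A, L.Finite ∧ RR z L x y := by
  induction hr with
  | refl => exact ⟨∅, empty_subset _, finite_empty, Relation.ReflTransGen.refl⟩
  | tail h1 h2 ih =>
    rename_i b c
    obtain ⟨L, hL, hf, hr⟩ := ih
    refine ⟨insert s(b, c) L, insert_subset h2.1 hL, hf.insert _, ?_⟩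
    exact (hr.mono (subset_insert _ _)).tail ⟨mem_insert _ _, h2.2⟩

theorem RR.ne {V : Type u} {z : V} {A : Set (Sym2 V)} {x y : V}
    (hr : RR z A x y) (hx : x ≠ z) : y ≠ z := by
  induction hr with
  | refl => exact hx
  | tail _ h _ => exact h.2.2

theorem RR.hit {V : Type u} {z : V} {A N : Set (Sym2 V)} {x y : V}
    (hr : RR z A x y) : RR z (A \ N) x y ∨ ∃ u, u ≠ z ∧ (∃ e ∈ N, u ∈ e) ∧ RR z (A \ N) x u := by
  induction hr using Relation.ReflTransGen.head_induction_on with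
  | refl => exact Or.inl Relation.ReflTransGen.refl
  | head h1 h2 ih =>
    rename_i a b
    by_cases hN : s(a, b) ∈ N
    · exact Or.inr ⟨a, h1.2.1, ⟨_, hN, Sym2.mem_mk_left _ _⟩, Relation.ReflTransGen.refl⟩
    · have hs : RZ z (A \ N) a b := ⟨⟨h1.1, hN⟩, h1.2⟩
      rcases ih with ih | ⟨u, hu, hu', ih⟩
      · exact Or.inl (Relation.ReflTransGen.head hs ih)
      · exact Or.inr ⟨u, hu, hu', Relation.ReflTransGen.head hs ih⟩

theorem GoodE.sUnion {V : Type u} {z : V} (SS : Set (Set (Sym2 V))) (h : ∀ S ∈ SS, GoodE z S) :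
    GoodE z (⋃₀ SS) := by
  constructor
  · rintro x y hx hy ⟨S, hS, he⟩
    exact ((h S hS).bridge x y hx hy he).mono (sdiff_subset_sdiff_left (subset_sUnion_of_mem hS))
  · rintro x hx ⟨S, hS, he⟩
    refine ((h S hS).inf x hx he).mono ?_
    rintro w ⟨h1, h2, h3⟩
    exact ⟨h1, ⟨S, hS, h2⟩, h3.mono (subset_sUnion_of_mem hS)⟩

theorem GoodE.countable {V : Type u} {z : V} (F : Set (Sym2 V)) (h : GoodE z F) (e : Sym2 V)
    (he : e ∈ F) : ∃ F' ⊆ F, e ∈ F' ∧ F'.Countable ∧ GoodE z F' := by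
  have h1 : ∀ x y, ∃ L : Set (Sym2 V), L ⊆ F ∧ L.Countable ∧
      (x ≠ z → y ≠ z → s(x, y) ∈ F → RR z (L \ {s(x, y)}) x y) := by
    intro x y
    by_cases hx : x ≠ z ∧ y ≠ z ∧ s(x, y) ∈ F
    · obtain ⟨L, h1, h2, h3⟩ := (h.bridge x y hx.1 hx.2.1 hx.2.2).fin
      refine ⟨L, h1.trans sdiff_subset, h2.countable, fun _ _ _ => h3.mono ?_⟩
      exact fun e he => ⟨he, (h1 he).2⟩
    · exact ⟨∅, empty_subset _, countable_empty, fun a b c => (hx ⟨a, b, c⟩).elim⟩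
  have h2 : ∀ x, ∃ L : Set (Sym2 V), L ⊆ F ∧ L.Countable ∧
      (x ≠ z → s(x, z) ∈ F → {w | w ≠ z ∧ s(w, z) ∈ L ∧ RR z L x w}.Infinite) := by
    intro x
    by_cases hx : x ≠ z ∧ s(x, z) ∈ F
    · have hinf := h.inf x hx.1 hx.2
      let f := hinf.natEmbedding
      have : ∀ n, ∃ L ⊆ F, L.Finite ∧ RR z L x (f n).1 := fun n => (f n).2.2.2.fin
      choose L l1 l2 l3 using this
      refine ⟨⋃ n, insert s((f n).1, z) (L n), iUnion_subset fun n =>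
        insert_subset (f n).2.2.1 (l1 n), countable_iUnion fun n => ((l2 n).insert _).countable,
        fun _ _ => ?_⟩
      have hr : (range fun n => (f n).1).Infinite :=
        infinite_range_of_injective (Subtype.val_injective.comp f.injective)
      refine hr.mono ?_
      rintro _ ⟨n, rfl⟩
      exact ⟨(f n).2.1, mem_iUnion.2 ⟨n, mem_insert _ _⟩,
        (l3 n).mono ((subset_insert _ _).trans
          (subset_iUnion (fun n => insert s((f n).1, z) (L n)) n))⟩
    · exact ⟨∅, empty_subset _, countable_empty, fun a b => (hx ⟨a, b⟩).elim⟩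
  choose P p1 p2 p3 using h1
  choose R r1 r2 r3 using h2
  let D : Sym2 V → Sym2 V → Set (Sym2 V) := fun a _ =>
    ⋃ x ∈ {x | x ∈ a}, (R x ∪ ⋃ y ∈ {y | y ∈ a}, P x y)
  have hfin : ∀ a : Sym2 V, {x | x ∈ a}.Countable := by
    intro a
    induction a with
    | h a b =>
      refine ((finite_singleton b).insert a).countable.mono ?_
      intro x hx
      simpa using hx
  have hDc : ∀ a b, (D a b).Countable := fun a b =>
    (hfin a).biUnion fun x _ => (r2 x).union ((hfin a).biUnion fun y _ => p2 x y)
  have hDF : ∀ a b, D a b ⊆ F := fun a b =>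
    iUnion₂_subset fun x _ => union_subset (r1 x) (iUnion₂_subset fun y _ => p1 x y)
  obtain ⟨S, s1, s2, s3, s4⟩ := cl_exists D {e}
  have hSF : S ⊆ F := s3 F (singleton_subset_iff.2 he) fun a _ b _ => hDF a b
  have hDR : ∀ x y, s(x, y) ∈ S → R x ⊆ S := fun x y hxy =>
    subset_trans (fun c hc => mem_iUnion₂.2 ⟨x, Sym2.mem_mk_left _ _, Or.inl hc⟩) (s2 _ hxy _ hxy)
  have hDP : ∀ x y, s(x, y) ∈ S → P x y ⊆ S := fun x y hxy =>
    subset_trans (fun c hc => mem_iUnion₂.2 ⟨x, Sym2.mem_mk_left _ _, Or.inr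
      (mem_iUnion₂.2 ⟨y, Sym2.mem_mk_right _ _, hc⟩)⟩) (s2 _ hxy _ hxy)
  refine ⟨S, hSF, s1 rfl, ?_, ?_, ?_⟩
  · exact Cardinal.le_aleph0_iff_set_countable.1 (s4 _ le_rfl (by simp)
      fun a b => (hDc a b).le_aleph0)
  · intro x y hx hy hxy
    exact (p3 x y hx hy (hSF hxy)).mono (sdiff_subset_sdiff_left (hDP x y hxy))
  · intro x hx hxz
    refine (r3 x hx (hSF hxz)).mono ?_
    rintro w ⟨w1, w2, w3⟩
    exact ⟨w1, hDR x z hxz w2, w3.mono (hDR x z hxz)⟩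

def ConnZ {V : Type u} (z : V) (p : V × V) (B : Set (Sym2 V)) : Prop :=
  (p.2 ≠ z ∧ RR z B p.1 p.2) ∨ (p.2 = z ∧ ∃ w, w ≠ z ∧ RR z B p.1 w ∧ s(w, z) ∈ B)

theorem GoodE.cut {V : Type u} {z : V} (F N : Set (Sym2 V)) (h : GoodE z F)
    (hcut : ∀ a ∈ N, ∀ b ∈ N, ∀ i ∈ {p : V × V | p.1 ∈ a ∧ (p.2 ∈ b ∨ p.2 = z)},
      ConnZ z i (F \ N) → ∀ L : Set (Sym2 V), L.Finite → ConnZ z i ((F \ N) \ L)) :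
    GoodE z (F \ N) := by
  constructor
  · intro x y hx hy hxy
    have hr := h.bridge x y hx hy hxy.1
    have hcomm : (F \ {s(x, y)}) \ N = (F \ N) \ {s(x, y)} := Set.sdiff_sdiff_comm
    have hxy' : RR z (F \ N) x y := Relation.ReflTransGen.single ⟨hxy, hx, hy⟩
    rcases hr.hit (N := N) with h1 | ⟨u, hu, ⟨a, ha, hua⟩, hxu⟩
    · rwa [hcomm] at h1
    rcases hr.symm.hit (N := N) with h1 | ⟨w, hw, ⟨b, hb, hwb⟩, hyw⟩
    · rw [hcomm] at h1; exact h1.symm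
    rw [hcomm] at hxu hyw
    have huw : RR z (F \ N) u w :=
      ((hxu.mono sdiff_subset).symm.trans hxy').trans (hyw.mono sdiff_subset)
    rcases hcut a ha b hb (u, w) ⟨hua, Or.inl hwb⟩ (Or.inl ⟨hw, huw⟩) {s(x, y)}
      (finite_singleton _) with h1 | h1
    · exact (hxu.trans h1.2).trans hyw.symm
    · exact (hw h1.1).elim
  · intro x hx hxz hfin
    by_cases hX : ∃ u, u ≠ z ∧ (∃ e ∈ N, u ∈ e) ∧ RR z (F \ N) x u
    · obtain ⟨u, hu, ⟨a, ha, hua⟩, hxu⟩ := hX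
      rcases hcut a ha a ha (u, z) ⟨hua, Or.inr rfl⟩ (Or.inr ⟨rfl, x, hx, hxu.symm, hxz⟩) _
        (hfin.image fun w => s(w, z)) with h1 | ⟨_, w, hw, h1, h2⟩
      · exact h1.1 rfl
      · exact h2.2 ⟨w, ⟨hw, h2.1, hxu.trans (h1.mono sdiff_subset)⟩, rfl⟩
    · refine h.inf x hx hxz.1 (hfin.subset ?_)
      rintro w ⟨w1, w2, w3⟩
      rcases w3.hit (N := N) with h1 | h1
      · refine ⟨w1, ⟨w2, fun hN => hX ⟨w, w1, ⟨_, hN, Sym2.mem_mk_left _ _⟩, h1⟩⟩, h1⟩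
      · exact (hX h1).elim

theorem GoodE.partition {V : Type u} {z : V} (F : Set (Sym2 V)) (h : GoodE z F) :
    ∃ PP : Set (Set (Sym2 V)), PP.PairwiseDisjoint id ∧ ⋃₀ PP = F ∧
      ∀ P ∈ PP, P.Countable ∧ GoodE z P := by
  refine abstract_main (GoodE z) GoodE.sUnion GoodE.countable (ConnZ z) ?_
    (fun a b => {p : V × V | p.1 ∈ a ∧ (p.2 ∈ b ∨ p.2 = z)}) ?_
    (fun F N hF _ hc => GoodE.cut F N hF hc) F h
  · rintro i A B hAB (⟨h1, h2⟩ | ⟨h1, w, h2, h3, h4⟩)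
    · exact Or.inl ⟨h1, h2.mono hAB⟩
    · exact Or.inr ⟨h1, w, h2, h3.mono hAB, hAB h4⟩
  · intro a b
    induction a with
    | h a a' =>
    induction b with
    | h b b' =>
      have : (({a, a'} : Set V) ×ˢ ({b, b', z} : Set V)).Finite := by
        apply Set.Finite.prod <;> simp
      refine this.countable.mono ?_
      rintro ⟨p, q⟩ ⟨h1, h2⟩
      simp at h1 h2 ⊢
      tauto

theorem mem_compSet_iff {V : Type u} {z : V} (G : SimpleGraph V)
    (x : (({z} : Set V)ᶜ : Set V)) (y : V) :
    y ∈ G.compSet {z} ((G.induce (({z} : Set V)ᶜ : Set V)).connectedComponentMk x) ↔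
      RR z G.edgeSet x y := by
  constructor
  · rintro ⟨y, hy, rfl⟩
    have hr : (G.induce (({z} : Set V)ᶜ : Set V)).Reachable x y :=
      (SimpleGraph.ConnectedComponent.exact hy).symm
    rw [SimpleGraph.reachable_iff_reflTransGen] at hr
    exact rtg_lift Subtype.val (fun a b hab => ⟨hab, a.2, b.2⟩) hr
  · intro hr
    induction hr with
    | refl => exact ⟨x, rfl, rfl⟩
    | tail h1 h2 ih =>
      rename_i b c
      obtain ⟨b, hb, rfl⟩ := ih
      refine ⟨⟨c, h2.2.2⟩, ?_, rfl⟩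
      have hadj : (G.induce (({z} : Set V)ᶜ : Set V)).Adj b ⟨c, h2.2.2⟩ := h2.1
      exact (SimpleGraph.ConnectedComponent.sound hadj.symm.reachable).trans hb

theorem goodE_of_goodAtZ {V : Type u} {z : V} (G : SimpleGraph V) (h : G.GoodAtZ z) :
    GoodE z G.edgeSet := by
  constructor
  · intro x y hx hy hxy
    obtain ⟨⟨-, h2⟩, -⟩ := h (SimpleGraph.connectedComponentMk _ ⟨x, hx⟩)
    set S := G.compSet {z} (SimpleGraph.connectedComponentMk _ ⟨x, hx⟩) with hS
    have hxS : x ∈ S := (mem_compSet_iff G ⟨x, hx⟩ x).2 Relation.ReflTransGen.refl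
    have hyS : y ∈ S := (mem_compSet_iff G ⟨x, hx⟩ y).2
      (Relation.ReflTransGen.single ⟨hxy, hx, hy⟩)
    have hz : ∀ s : S, s.1 ≠ z := fun s => by
      obtain ⟨t, _, ht⟩ := s.2
      rw [← ht]; exact t.2
    have hr := (h2 s(⟨x, hxS⟩, ⟨y, hyS⟩) hxy).preconnected ⟨x, hxS⟩ ⟨y, hyS⟩
    rw [SimpleGraph.reachable_iff_reflTransGen] at hr
    refine rtg_lift Subtype.val (fun a b hab => ?_) hr
    rw [SimpleGraph.deleteEdges_adj] at hab
    refine ⟨⟨hab.1, fun he => hab.2 ?_⟩, hz a, hz b⟩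
    have he' : s(a.1, b.1) = s(x, y) := he
    rw [Sym2.eq_iff] at he'
    show s(a, b) = s(_, _)
    rw [Sym2.eq_iff]
    simpa [Subtype.ext_iff] using he'
  · intro x hx hxz
    obtain ⟨-, h2⟩ := h (SimpleGraph.connectedComponentMk _ ⟨x, hx⟩)
    rcases h2 with h2 | h2
    · have : s(x, z) ∈ (∅ : Set (Sym2 V)) := by
        rw [← h2]
        exact ⟨hxz, x, (mem_compSet_iff G ⟨x, hx⟩ x).2 Relation.ReflTransGen.refl, rfl⟩
      exact this.elim
    · intro hfin
      refine h2 ((hfin.image fun w => s(w, z)).subset ?_)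
      rintro _ ⟨he, w, hw, rfl⟩
      have hr := (mem_compSet_iff G ⟨x, hx⟩ w).1 hw
      exact ⟨w, ⟨hr.ne hx, he, hr⟩, rfl⟩

theorem goodAtZ_of_goodE {V : Type u} {z : V} (G : SimpleGraph V) (h : GoodE z G.edgeSet) :
    G.GoodAtZ z := by
  intro C
  induction C using SimpleGraph.ConnectedComponent.ind with
  | h x =>
  obtain ⟨x, hx⟩ := x
  have hmem := mem_compSet_iff G ⟨x, hx⟩
  set S := G.compSet {z} (SimpleGraph.connectedComponentMk _ ⟨x, hx⟩) with hS
  have hxS : x ∈ S := (hmem x).2 Relation.ReflTransGen.refl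
  have htrans : ∀ (K : SimpleGraph S) (B : Set (Sym2 V)), B ⊆ G.edgeSet →
      (∀ a b : S, s(a.1, b.1) ∈ B → K.Reachable a b) →
      ∀ (a : S) (y : V), RR z B a y → ∃ hy : y ∈ S, K.Reachable a ⟨y, hy⟩ := by
    intro K B hB hK a y hr
    induction hr with
    | refl => exact ⟨a.2, SimpleGraph.Reachable.refl _⟩
    | tail h1 h2 ih =>
      rename_i b c
      obtain ⟨hb, ih⟩ := ih
      have hc : c ∈ S := (hmem c).2 (((hmem b).1 hb).tail ⟨hB h2.1, h2.2⟩)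
      exact ⟨hc, ih.trans (hK ⟨b, hb⟩ ⟨c, hc⟩ h2.1)⟩
  have hconn : ∀ K : SimpleGraph S, (∀ a b : S, s(a.1, b.1) ∈ G.edgeSet → K.Reachable a b) →
      K.Connected := by
    intro K hK
    have : Nonempty S := ⟨⟨x, hxS⟩⟩
    refine SimpleGraph.Connected.mk fun a b => ?_
    exact (htrans K _ subset_rfl hK a b (((hmem a).1 a.2).symm.trans ((hmem b).1 b.2))).2
  have hz : ∀ s : S, s.1 ≠ z := fun s => ((hmem s).1 s.2).ne hx
  refine ⟨⟨hconn _ fun a b hab => ?_, ?_⟩, ?_⟩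
  · have : (G.induce S).Adj a b := hab
    exact this.reachable
  · intro e _
    have hstep : ∀ a b : S, s(a.1, b.1) ∈ G.edgeSet → s(a, b) ≠ e →
        ((G.induce S).deleteEdges {e}).Reachable a b := by
      intro a b hab hne
      have : ((G.induce S).deleteEdges {e}).Adj a b := by
        rw [SimpleGraph.deleteEdges_adj]; exact ⟨hab, hne⟩
      exact this.reachable
    refine hconn _ fun a b hab => ?_
    by_cases hne : s(a, b) = e
    · refine (htrans _ _ sdiff_subset ?_ a b.1 (h.bridge a b (hz a) (hz b) hab)).2
      intro c d hcd
      refine hstep c d hcd.1 fun hcd' => hcd.2 ?_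
      rw [← hne] at hcd'
      exact congrArg (Sym2.map Subtype.val) hcd'
    · exact hstep a b hab hne
  · by_cases hne : ∃ w ∈ S, s(w, z) ∈ G.edgeSet
    · right
      obtain ⟨w, hw, hwz⟩ := hne
      have hr := (hmem w).1 hw
      have hinf := h.inf w (hr.ne hx) hwz
      have hinj : Function.Injective fun w : V => s(w, z) := by
        intro a b hab
        exact Sym2.congr_left.1 hab
      refine (hinf.image hinj.injOn).mono ?_
      rintro _ ⟨v, ⟨v1, v2, v3⟩, rfl⟩
      exact ⟨v2, v, (hmem v).2 (hr.trans v3), rfl⟩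
    · left
      rw [eq_empty_iff_forall_notMem]
      rintro _ ⟨he, w, hw, rfl⟩
      exact hne ⟨w, hw, he⟩

end

/-- If every connected component of `H − z` is 2-edge-connected and is joined to `z` by
zero or infinitely many edges, then `E(H)` can be partitioned into countable sets `E i`
such that each spanning subgraph `(V(H), E i)` has the same property. -/
theorem exists_countable_partition_goodAtZ {V : Type u} (H : SimpleGraph V) (z : V)
    (hH : H.GoodAtZ z) :
    ∃ (I : Type u) (E : I → Set (Sym2 V)),
      (∀ i, (E i).Countable) ∧
      (∀ i j, i ≠ j → Disjoint (E i) (E j)) ∧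
      (⋃ i, E i) = H.edgeSet ∧
      ∀ i, (SimpleGraph.fromEdgeSet (E i)).GoodAtZ z := by
  obtain ⟨PP, h1, h2, h3⟩ := GoodE.partition H.edgeSet (goodE_of_goodAtZ H hH)
  refine ⟨PP, fun P => P.1, fun P => (h3 P P.2).1, fun P Q hPQ =>
    h1 P.2 Q.2 fun h => hPQ (Subtype.ext h), ?_, fun P => ?_⟩
  · rw [← Set.sUnion_eq_iUnion, h2]
  · apply goodAtZ_of_goodE
    have hP : P.1 ⊆ H.edgeSet := by rw [← h2]; exact Set.subset_sUnion_of_mem P.2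
    have : (SimpleGraph.fromEdgeSet P.1).edgeSet = P.1 := by
      rw [SimpleGraph.edgeSet_fromEdgeSet]
      refine Set.Subset.antisymm Set.sdiff_subset fun e he => ⟨he, fun hd => ?_⟩
      exact SimpleGraph.not_isDiag_of_mem_edgeSet _ (hP he) hd
    rw [this]
    exact (h3 P P.2).2
end

section
/- Let G be the subdivided infinite star: the graph with vertex set {c} ∪ {a_n : n ∈ ℕ} ∪ {b_n : n ∈ ℕ} (all vertices distinct) whose edges are exactly c a_n and a_n b_n for each n ∈ ℕ. Then G has no T-join for T = V(G), the entire vertex set. -/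
/-- The subdivided infinite star (center `c`, with edges `c aₙ` and `aₙ bₙ` for `n ∈ ℕ`)
has no `T`-join for `T` the entire vertex set. -/
theorem subdivided_star_no_tJoin {V : Type*} (G : SimpleGraph V) (c : V) (a b : ℕ → V)
    (ha : Function.Injective a) (hb : Function.Injective b)
    (hab : ∀ m n, a m ≠ b n) (hca : ∀ n, c ≠ a n) (hcb : ∀ n, c ≠ b n)
    (hvert : ∀ v : V, v = c ∨ (∃ n, v = a n) ∨ (∃ n, v = b n))
    (hadj : ∀ u v : V, G.Adj u v ↔ ∃ n,
      (u = c ∧ v = a n) ∨ (v = c ∧ u = a n) ∨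
      (u = a n ∧ v = b n) ∨ (v = a n ∧ u = b n)) :
    ¬ G.HasTJoin Set.univ := by
  rintro ⟨P, h1, h2, h3⟩
  -- a walk with exactly one end in `{a n, b n}` uses the edge `c a n`
  have key : ∀ (n : ℕ) (u v : V) (w : G.Walk u v), (u = a n ∨ u = b n) → v ≠ a n → v ≠ b n →
      s(c, a n) ∈ w.edges := by
    intro n u v w hu hva hvb
    obtain ⟨d, hd, hd1, hd2⟩ := w.exists_boundary_dart {x | x = a n ∨ x = b n} hu
      (by rintro (h | h); exacts [hva h, hvb h])
    have hedge : s(d.fst, d.snd) ∈ w.edges := List.mem_map.2 ⟨d, hd, rfl⟩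
    obtain ⟨m, hm⟩ := (hadj _ _).1 d.adj
    simp only [Set.mem_setOf_eq, not_or] at hd1 hd2
    have h : d.fst = a n ∧ d.snd = c := by
      rcases hm with ⟨e1, e2⟩ | ⟨e1, e2⟩ | ⟨e1, e2⟩ | ⟨e1, e2⟩ <;>
        rcases hd1 with f | f <;> grind [Function.Injective]
    rw [h.1, h.2, Sym2.eq_swap] at hedge
    exact hedge
  have key2 : ∀ (n : ℕ) (p : Σ u : V, Σ v : V, G.Walk u v) (x y : V),
      (x = a n ∨ x = b n) → y ≠ a n → y ≠ b n →
      (p.1 = x ∧ p.2.1 = y ∨ p.1 = y ∧ p.2.1 = x) → s(c, a n) ∈ p.2.2.edges := by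
    rintro n ⟨u, v, w⟩ x y hx hy hy' (⟨h, h'⟩ | ⟨h, h'⟩)
    · dsimp only at h h' ⊢
      subst h h'
      exact key n _ _ w hx hy hy'
    · dsimp only at h h' ⊢
      subst h h'
      have := key n _ _ w.reverse hx hy hy'
      simpa using this
  -- every vertex lies on a path with another endpoint
  have ends : ∀ x : V, ∃ p ∈ P, ∃ y, y ≠ x ∧ (p.1 = x ∧ p.2.1 = y ∨ p.1 = y ∧ p.2.1 = x) := by
    intro x
    obtain ⟨p, ⟨hp, hx⟩, -⟩ := h3 x trivial
    have hne := (h1 p hp).2.1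
    rcases hx with h | h
    · exact ⟨p, hp, p.2.1, by rw [← h]; exact hne.symm, Or.inl ⟨h, rfl⟩⟩
    · exact ⟨p, hp, p.1, by rw [← h]; exact hne, Or.inr ⟨rfl, h⟩⟩
  have uniq : ∀ x : V, ∀ p ∈ P, ∀ q ∈ P, (p.1 = x ∨ p.2.1 = x) → (q.1 = x ∨ q.2.1 = x) → p = q :=
    fun x p hp q hq h h' => (h3 x trivial).unique ⟨hp, h⟩ ⟨hq, h'⟩
  have pair : ∀ n, ∃ p ∈ P, (p.1 = a n ∧ p.2.1 = b n ∨ p.1 = b n ∧ p.2.1 = a n) := by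
    intro n
    obtain ⟨p, hp, y, hy, hpy⟩ := ends (a n)
    obtain ⟨q, hq, z, hz, hqz⟩ := ends (b n)
    by_cases hyb : y = b n
    · subst hyb
      exact ⟨p, hp, hpy⟩
    by_cases hza : z = a n
    · subst hza
      exact ⟨q, hq, hqz.symm⟩
    have e1 := key2 n p _ y (Or.inl rfl) hy hyb hpy
    have e2 := key2 n q _ z (Or.inr rfl) hza hz hqz
    by_cases hpq : p = q
    · exfalso
      subst hpq
      have := hab n n
      grind
    · exact absurd e2 (h2 p hp q hq hpq _ e1)
  obtain ⟨r, hr, y, hy, hry⟩ := ends c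
  rcases hvert y with h | ⟨n, h⟩ | ⟨n, h⟩
  · exact hy h
  all_goals
    obtain ⟨p, hp, hpp⟩ := pair n
    have hrp := uniq y r hr p hp (by tauto) (by subst h; tauto)
    subst hrp
    have := hca n
    have := hcb n
    have := hab n n
    grind
end
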